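/- arXiv:math/9501221 — 2 statements merged into one kernel-verified Lean document; each statement's English description precedes it below -/
import Mathlib

section
/- Fix k ≥ 1 and let p̄ = (p(1), p(2), …) be a sequence with 0 ≤ p(i) < 1 for all i such that ∏_{i=1}^n (1 − p(i)) ≥ n^{−1/(10k)} for all n. Let H be a graph with vertex set [k] that is admissible for p̄. Then the probability that G(n,p̄) contains at least n^{0.1} pairwise vertex-disjoint exact copies of H, none of which contains a vertex smaller than log n or larger than n − log n, tends to 1 as n → ∞. -/
open FirstOrder Filter

namespace RandomGraph

/-- The set of potential edges of a graph on `Fin n` (pairs `(v,w)` with `v < w`).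
Vertex `v : Fin n` represents the number `v + 1` of the interval `[n] = {1, …, n}`. -/
abbrev EdgeIdx (n : ℕ) := {e : Fin n × Fin n // e.1 < e.2}

/-- An outcome of the random graph on `[n]`: a choice of which potential edges are present. -/
abbrev Sample (n : ℕ) := EdgeIdx n → Bool

/-- Adjacency of two vertices (described by their values in `Fin n`) in the outcome `ω`. -/
def adjVal {n : ℕ} (ω : Sample n) (a b : ℕ) : Prop :=
  ∃ e : EdgeIdx n, ω e = true ∧
    ((e.1.1.val = a ∧ e.1.2.val = b) ∨ (e.1.1.val = b ∧ e.1.2.val = a))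

/-- Adjacency of two vertices in the outcome `ω`. -/
def sampleAdj {n : ℕ} (ω : Sample n) (v w : Fin n) : Prop := adjVal ω v.val w.val

/-- The probability of the outcome `ω` in the model `G(n, p̄)`: each pair of distinct
vertices at distance `d` is an edge with probability `p d`, independently.  (The value `p 0` is
never used, since distinct vertices are at distance at least 1.) -/
noncomputable def sampleWeight (p : ℕ → ℝ) {n : ℕ} (ω : Sample n) : ℝ :=
  ∏ e : EdgeIdx n,
    (if ω e then p (e.1.2.val - e.1.1.val) else 1 - p (e.1.2.val - e.1.1.val))

/-- The probability of the outcome `ω` in the circular model `C(n, p̄)`: vertices `v, w` are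
adjacent with probability `p (min |v-w| (n - |v-w|))`, independently. -/
noncomputable def cWeight (p : ℕ → ℝ) {n : ℕ} (ω : Sample n) : ℝ :=
  ∏ e : EdgeIdx n,
    (if ω e then p (min (e.1.2.val - e.1.1.val) (n - (e.1.2.val - e.1.1.val)))
      else 1 - p (min (e.1.2.val - e.1.1.val) (n - (e.1.2.val - e.1.1.val))))

open scoped Classical in
/-- The probability of the event `P` in the random graph `G(n, p̄)`. -/
noncomputable def Pr (p : ℕ → ℝ) (n : ℕ) (P : Sample n → Prop) : ℝ :=
  ∑ ω : Sample n, if P ω then sampleWeight p ω else 0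

open scoped Classical in
/-- The probability of the event `P` in the circular random graph `C(n, p̄)`. -/
noncomputable def cPr (p : ℕ → ℝ) (n : ℕ) (P : Sample n → Prop) : ℝ :=
  ∑ ω : Sample n, if P ω then cWeight p ω else 0

/-! ### The language `L` of graphs (also used as the language `L^c`) -/

/-- An outcome `ω` of the random graph, viewed as a structure of `FirstOrder.Language.graph`,
the language with a single binary adjacency predicate. -/
def graphStructure {n : ℕ} (ω : Sample n) : Language.graph.Structure (Fin n) where
  RelMap | .adj => fun x => sampleAdj ω (x 0) (x 1)

/-- Satisfaction of a sentence of the language `L` in the outcome `ω`. -/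
def SatL {n : ℕ} (ω : Sample n) (ψ : Language.graph.Sentence) : Prop :=
  @Language.Sentence.Realize _ _ (graphStructure ω) ψ

/-- `Prob(n, p̄; ψ)` for a sentence `ψ` of the language `L`. -/
noncomputable def ProbL (p : ℕ → ℝ) (n : ℕ) (ψ : Language.graph.Sentence) : ℝ :=
  Pr p n fun ω => SatL ω ψ

/-- The probability that `C(n, p̄)` satisfies a sentence `ψ` of the language `L^c = L`. -/
noncomputable def cProbL (p : ℕ → ℝ) (n : ℕ) (ψ : Language.graph.Sentence) : ℝ :=
  cPr p n fun ω => SatL ω ψ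

/-! ### The language `L₊` -/

/-- The constants of the language `L₊`: the first element `1` and the last element `n`. -/
inductive plusFunc : ℕ → Type
  | one : plusFunc 0
  | last : plusFunc 0

/-- The relations of `L₊`: adjacency and successor. -/
inductive plusRel : ℕ → Type
  | adj : plusRel 2
  | succ : plusRel 2

/-- The language `L₊` with adjacency, successor (`x = y + 1`), and constants `1` and `n`. -/
def Lplus : Language := ⟨plusFunc, plusRel⟩

/-- An outcome `ω` of the random graph on `[m+1]`, as an `L₊`-structure. -/
def plusStructure {m : ℕ} (ω : Sample (m + 1)) : Lplus.Structure (Fin (m + 1)) where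
  funMap | .one => fun _ => 0 | .last => fun _ => Fin.last m
  RelMap
    | .adj => fun x => sampleAdj ω (x 0) (x 1)
    | .succ => fun x => (x 0).val = (x 1).val + 1

/-- `Prob(n, p̄; ψ)` for a sentence `ψ` of `L₊` (set to `0` in the irrelevant case `n = 0`,
where the constants cannot be interpreted). -/
noncomputable def ProbPlus (p : ℕ → ℝ) : ℕ → Lplus.Sentence → ℝ
  | 0, _ => 0
  | (m + 1), ψ => Pr p (m + 1) fun ω => @Language.Sentence.Realize _ _ (plusStructure ω) ψ

/-! ### The language `L≤` -/

/-- The relations of `L≤`: adjacency and linear order. -/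
inductive leRel : ℕ → Type
  | adj : leRel 2
  | le : leRel 2

/-- The language `L≤` with adjacency and a linear order. -/
def Lle : Language := ⟨fun _ => Empty, leRel⟩

/-- An outcome `ω` of the random graph on `[n]`, as an `L≤`-structure. -/
def leStructure {n : ℕ} (ω : Sample n) : Lle.Structure (Fin n) where
  funMap := fun f _ => Empty.elim f
  RelMap
    | .adj => fun x => sampleAdj ω (x 0) (x 1)
    | .le => fun x => x 0 ≤ x 1

/-- Satisfaction of a sentence of `L≤` in the outcome `ω`. -/
def SatLe {n : ℕ} (ω : Sample n) (ψ : Lle.Sentence) : Prop :=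
  @Language.Sentence.Realize _ _ (leStructure ω) ψ

/-- `Prob(n, p̄; ψ)` for a sentence `ψ` of `L≤`. -/
noncomputable def ProbLe (p : ℕ → ℝ) (n : ℕ) (ψ : Lle.Sentence) : ℝ :=
  Pr p n fun ω => SatLe ω ψ

/-! ### The circular languages `L₊^c` and `L≤^c` -/

/-- The relations of `L₊^c`: adjacency and cyclic successor. -/
inductive plusCRel : ℕ → Type
  | adj : plusCRel 2
  | succ : plusCRel 2

/-- The language `L₊^c`, with adjacency and cyclic successor (`x = y + 1 (mod n)`). -/
def LplusC : Language := ⟨fun _ => Empty, plusCRel⟩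

/-- An outcome `ω` of the circular random graph on `[n]`, as an `L₊^c`-structure. -/
def plusCStructure {n : ℕ} (ω : Sample n) : LplusC.Structure (Fin n) where
  funMap := fun f _ => Empty.elim f
  RelMap
    | .adj => fun x => sampleAdj ω (x 0) (x 1)
    | .succ => fun x => (x 0).val = ((x 1).val + 1) % n

/-- The probability that `C(n, p̄)` satisfies a sentence `ψ` of the language `L₊^c`. -/
noncomputable def cProbPlus (p : ℕ → ℝ) (n : ℕ) (ψ : LplusC.Sentence) : ℝ :=
  cPr p n fun ω => @Language.Sentence.Realize _ _ (plusCStructure ω) ψ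

/-- The relations of `L≤^c`: adjacency and the ternary clockwise-order predicate. -/
inductive cycRel : ℕ → Type
  | adj : cycRel 2
  | btw : cycRel 3

/-- The language `L≤^c`, with adjacency and the ternary clockwise-order predicate `C`. -/
def Lcyc : Language := ⟨fun _ => Empty, cycRel⟩

/-- `C(a, b, c)`: `a ≤ b ≤ c` holds after some cyclic permutation of `(a, b, c)`. -/
def cyclicBtw {n : ℕ} (a b c : Fin n) : Prop :=
  (a ≤ b ∧ b ≤ c) ∨ (b ≤ c ∧ c ≤ a) ∨ (c ≤ a ∧ a ≤ b)

/-- An outcome `ω` of the circular random graph on `[n]`, as an `L≤^c`-structure. -/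
def cycStructure {n : ℕ} (ω : Sample n) : Lcyc.Structure (Fin n) where
  funMap := fun f _ => Empty.elim f
  RelMap
    | .adj => fun x => sampleAdj ω (x 0) (x 1)
    | .btw => fun x => cyclicBtw (x 0) (x 1) (x 2)

/-- Satisfaction of a sentence of `L≤^c` in the outcome `ω`. -/
def SatCyc {n : ℕ} (ω : Sample n) (ψ : Lcyc.Sentence) : Prop :=
  @Language.Sentence.Realize _ _ (cycStructure ω) ψ

/-- The probability that `C(n, p̄)` satisfies a sentence `ψ` of the language `L≤^c`. -/
noncomputable def cProbCyc (p : ℕ → ℝ) (n : ℕ) (ψ : Lcyc.Sentence) : ℝ :=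
  cPr p n fun ω => SatCyc ω ψ


/-- `H` (a graph on `[k]`) has an exact copy in the outcome `ω` (a graph on `[n]`) occupying
the vertices `i+1, …, i+k` of `[n]`: the copy induces the same adjacencies as `H`, and no
edge of `ω` has exactly one endpoint among these vertices.  (Vertices are identified with
their values: vertex `v : Fin n` has value `v`, representing the number `v + 1 ∈ [n]`.) -/
def IsExactCopyAt {k n : ℕ} (H : Sample k) (ω : Sample n) (i : ℕ) : Prop :=
  i + k ≤ n ∧
  (∀ a b : ℕ, a < k → b < k → (adjVal H a b ↔ adjVal ω (i + a) (i + b))) ∧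
  (∀ v w : ℕ, adjVal ω v w → ((i ≤ v ∧ v < i + k) ↔ (i ≤ w ∧ w < i + k)))

/-!
Cut `[n]` into blocks of `k` consecutive vertices and count, by the second moment method, the blocks
in the second quarter of `[n]` that carry an exact copy of `H`. Carrying a copy prescribes the edges
incident to a block. Each vertex has at most two potential edges of each length, so if
`∏_{d ≤ n} (1 - p d) ≥ n^(-α)` this event has probability at least `ℙ(G(k, p̄) = H) · n^(-2kα)`, and
the expected count is of order at least `n^(1 - 2kα)`.

The events of two disjoint blocks agree that the at most `k²` edges between the blocks are absent.
If all these edges have probability at most `δ`, the events are therefore correlated by a factor of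
at most `(1 - δ)^(-k²)`. Since `1 - x ≤ exp (-x)`, the hypothesis on the product allows at most
`α log n / δ` lengths `d` with `p d > δ`, so each block is linked by edges of such a length to
only `O(log n / δ)` other blocks. With `δ = 1 / log n` the variance is `o` of the squared mean, and
Chebyshev's inequality applies.
-/

section SecondMoment

open MeasureTheory ProbabilityTheory Finset

variable {Ω ι : Type*} {mΩ : MeasurableSpace Ω} {μ : Measure Ω} [IsProbabilityMeasure μ]

theorem memLp_indicator_one {A : Set Ω} (hA : MeasurableSet A) :
    MemLp (A.indicator (1 : Ω → ℝ)) 2 μ :=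
  (memLp_const 1).indicator hA

theorem covariance_indicator_one {A B : Set Ω} (hA : MeasurableSet A) (hB : MeasurableSet B) :
    cov[A.indicator (1 : Ω → ℝ), B.indicator 1; μ] = μ.real (A ∩ B) - μ.real A * μ.real B := by
  rw [covariance_eq_sub (memLp_indicator_one hA) (memLp_indicator_one hB),
    ← Set.inter_indicator_one, integral_indicator_one (hA.inter hB), integral_indicator_one hA,
    integral_indicator_one hB]

theorem one_sub_variance_div_sq_le_measureReal_half_integral_le {X : Ω → ℝ} (hX : MemLp X 2 μ)
    (hpos : 0 < μ[X]) :
    1 - 4 * (Var[X; μ] / μ[X] ^ 2) ≤ μ.real {ω | μ[X] / 2 ≤ X ω} := by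
  have deviation : μ.real {ω | μ[X] / 2 ≤ |X ω - μ[X]|} ≤ 4 * (Var[X; μ] / μ[X] ^ 2) := by
    have variance_nonneg := variance_nonneg X μ
    refine ENNReal.toReal_le_of_le_ofReal (by positivity)
      ((meas_ge_le_variance_div_sq hX (half_pos hpos)).trans_eq ?_)
    congr 1
    field
  have cover : {ω | μ[X] / 2 ≤ X ω} ∪ {ω | μ[X] / 2 ≤ |X ω - μ[X]|} = Set.univ := by
    refine Set.eq_univ_of_forall fun ω => or_iff_not_imp_left.2 fun hω => ?_
    rw [Set.mem_ofPred_eq, not_le] at hω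
    rw [Set.mem_ofPred_eq]
    linarith [neg_le_abs (X ω - μ[X])]
  have total := measureReal_union_le (μ := μ) {ω | μ[X] / 2 ≤ X ω} {ω | μ[X] / 2 ≤ |X ω - μ[X]|}
  rw [cover, probReal_univ] at total
  linarith

variable {T : Finset ι} {A : ι → Set Ω} {bad : ι → ι → Prop} [∀ i, DecidablePred (bad i)] {K : ℕ}
  {η : ℝ}

theorem variance_sum_indicator_one_le (hA : ∀ i, MeasurableSet (A i)) (hη : 0 ≤ η)
    (hbad : ∀ i ∈ T, #{j ∈ T | bad i j} ≤ K)
    (hgood : ∀ i ∈ T, ∀ j ∈ T, ¬ bad i j →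
      μ.real (A i ∩ A j) ≤ (1 + η) * (μ.real (A i) * μ.real (A j))) :
    Var[∑ i ∈ T, (A i).indicator 1; μ] ≤
      K * ∑ i ∈ T, μ.real (A i) + η * (∑ i ∈ T, μ.real (A i)) ^ 2 := by
  have covariance_le (i) (hi : i ∈ T) (j) (hj : j ∈ T) :
      cov[(A i).indicator (1 : Ω → ℝ), (A j).indicator 1; μ] ≤
        (if bad i j then μ.real (A i) else 0) + η * (μ.real (A i) * μ.real (A j)) := by
    have hprod : 0 ≤ μ.real (A i) * μ.real (A j) := by positivity
    rw [covariance_indicator_one (hA i) (hA j)]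
    split_ifs with hij
    · have hinter : μ.real (A i ∩ A j) ≤ μ.real (A i) := measureReal_mono Set.inter_subset_left
      linarith [mul_nonneg hη hprod]
    · linarith [hgood i hi j hj hij]
  have row_le (i) (hi : i ∈ T) :
      ∑ j ∈ T, cov[(A i).indicator (1 : Ω → ℝ), (A j).indicator 1; μ] ≤
        K * μ.real (A i) + η * (μ.real (A i) * ∑ j ∈ T, μ.real (A j)) := by
    refine (sum_le_sum (covariance_le i hi)).trans ?_
    rw [sum_add_distrib, ← sum_filter, sum_const, nsmul_eq_mul, ← mul_sum, ← mul_sum]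
    gcongr
    exact hbad i hi
  rw [variance_sum' fun i _ => memLp_indicator_one (hA i)]
  refine (sum_le_sum row_le).trans_eq ?_
  rw [sum_add_distrib, ← mul_sum, ← mul_sum, ← sum_mul, sq]

open scoped Classical in
theorem one_sub_le_measureReal_half_mean_le_card (hA : ∀ i, MeasurableSet (A i)) (hη : 0 ≤ η)
    (hbad : ∀ i ∈ T, #{j ∈ T | bad i j} ≤ K)
    (hgood : ∀ i ∈ T, ∀ j ∈ T, ¬ bad i j →
      μ.real (A i ∩ A j) ≤ (1 + η) * (μ.real (A i) * μ.real (A j)))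
    (hpos : 0 < ∑ i ∈ T, μ.real (A i)) :
    1 - 4 * (K / ∑ i ∈ T, μ.real (A i) + η) ≤
      μ.real {ω | (∑ i ∈ T, μ.real (A i)) / 2 ≤ #{i ∈ T | ω ∈ A i}} := by
  have count_eq (ω : Ω) : (∑ i ∈ T, (A i).indicator (1 : Ω → ℝ)) ω = #{i ∈ T | ω ∈ A i} := by
    simp [Set.indicator_apply]
  have mean_eq : μ[∑ i ∈ T, (A i).indicator (1 : Ω → ℝ)] = ∑ i ∈ T, μ.real (A i) := by
    simp_rw [Finset.sum_apply]
    rw [integral_finsetSum T fun i _ => (memLp_indicator_one (hA i)).integrable one_le_two]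
    exact sum_congr rfl fun i _ => integral_indicator_one (hA i)
  have chebyshev := one_sub_variance_div_sq_le_measureReal_half_integral_le
    (memLp_finsetSum' T fun i _ => memLp_indicator_one (hA i)) (mean_eq ▸ hpos)
  simp_rw [mean_eq, count_eq] at chebyshev
  refine le_trans ?_ chebyshev
  gcongr
  rw [div_le_iff₀ (by positivity)]
  refine (variance_sum_indicator_one_le hA hη hbad hgood).trans_eq ?_
  field

end SecondMoment

section Products

theorem prod_le_prod_comp_of_injOn {ι κ R : Type*} [CommMonoidWithZero R] [PartialOrder R]
    [ZeroLEOneClass R] [PosMulMono R] {s : Finset ι} {t : Finset κ} {f : ι → κ} {g : κ → R}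
    (hf : Set.MapsTo f s t) (hinj : Set.InjOn f s) (hg₀ : ∀ b ∈ t, 0 ≤ g b)
    (hg₁ : ∀ b ∈ t, g b ≤ 1) : ∏ b ∈ t, g b ≤ ∏ a ∈ s, g (f a) := by
  classical
  rw [← Finset.prod_image hinj]
  exact Finset.prod_le_prod_of_subset_of_le_one (Finset.image_subset_iff.2 hf) hg₀
    fun b hb _ => hg₁ b hb

open MeasureTheory in
theorem measureReal_pi_inter_mul_prod {ι : Type*} [Fintype ι] [DecidableEq ι] {X : ι → Type*}
    [∀ i, MeasurableSpace (X i)] (ν : ∀ i, Measure (X i)) [∀ i, IsProbabilityMeasure (ν i)]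
    {F G : Finset ι} {s t : ∀ i, Set (X i)} (hst : ∀ i ∈ F ∩ G, s i = t i) :
    (Measure.pi ν).real ((F : Set ι).pi s ∩ (G : Set ι).pi t) * ∏ i ∈ F ∩ G, (ν i).real (s i) =
      (Measure.pi ν).real ((F : Set ι).pi s) * (Measure.pi ν).real ((G : Set ι).pi t) := by
  set u : ∀ i, Set (X i) := F.piecewise s t
  have hu_left (i) (hi : i ∈ F) : u i = s i := F.piecewise_eq_of_mem s t hi
  have hu_right (i) (hi : i ∈ G) : u i = t i := by
    by_cases hiF : i ∈ F
    · rw [hu_left i hiF, hst i (Finset.mem_inter.2 ⟨hiF, hi⟩)]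
    · exact F.piecewise_eq_of_notMem s t hiF
  have measureReal_pi_finset (E : Finset ι) :
      (Measure.pi ν).real ((E : Set ι).pi u) = ∏ i ∈ E, (ν i).real (u i) := by
    simp only [Measure.real, Measure.pi_pi_finset, ENNReal.toReal_prod]
  rw [← Set.pi_congr rfl hu_left, ← Set.pi_congr rfl hu_right, ← Set.union_pi, ← Finset.coe_union,
    measureReal_pi_finset, measureReal_pi_finset, measureReal_pi_finset,
    ← Finset.prod_congr rfl fun i hi => congrArg (ν i).real (hu_left i (Finset.mem_inter.1 hi).1),
    Finset.prod_union_inter]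

theorem prod_one_sub_le_exp_neg_mul_card {ι : Type*} {s : Finset ι} {q : ι → ℝ} (δ : ℝ)
    (hq : ∀ i ∈ s, q i ∈ Set.Icc 0 1) :
    ∏ i ∈ s, (1 - q i) ≤ Real.exp (-(δ * Finset.card {i ∈ s | δ < q i})) := by
  calc ∏ i ∈ s, (1 - q i) ≤ ∏ i ∈ s with δ < q i, (1 - q i) :=
        Finset.prod_le_prod_of_subset_of_le_one (Finset.filter_subset _ s)
          (fun i hi => sub_nonneg.2 (hq i hi).2) fun i hi _ => sub_le_self 1 (hq i hi).1
    _ ≤ ∏ i ∈ s with δ < q i, Real.exp (-δ) := by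
        refine Finset.prod_le_prod (fun i hi => ?_) fun i hi => ?_
        · exact sub_nonneg.2 (hq i (Finset.mem_filter.1 hi).1).2
        · exact (Real.one_sub_le_exp_neg (q i)).trans
            (Real.exp_le_exp.2 (neg_le_neg (Finset.mem_filter.1 hi).2.le))
    _ = Real.exp (-(δ * Finset.card {i ∈ s | δ < q i})) := by
        rw [Finset.prod_const, ← Real.exp_nat_mul]
        ring_nf

end Products

section GraphMeasure

open MeasureTheory ProbabilityTheory

/-- The distance between the endpoints of a potential edge. -/
def edgeLength {n : ℕ} (e : EdgeIdx n) : ℕ := e.1.2.val - e.1.1.val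

theorem edgeLength_mem_Icc {n : ℕ} (e : EdgeIdx n) : edgeLength e ∈ Finset.Icc 1 n :=
  Finset.mem_Icc.2 ⟨Nat.sub_pos_of_lt e.2, (Nat.sub_le _ _).trans e.1.2.isLt.le⟩

/-- The law of `G(n, p̄)`: the product over all potential edges of Bernoulli measures. -/
noncomputable def graphMeasure (p : ℕ → unitInterval) (n : ℕ) : Measure (Sample n) :=
  Measure.pi fun e => Ber(true, false, p (edgeLength e))

instance (p : ℕ → unitInterval) (n : ℕ) : IsProbabilityMeasure (graphMeasure p n) := by
  unfold graphMeasure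
  infer_instance

theorem bernoulliMeasure_real_singleton (q : unitInterval) (b : Bool) :
    Ber(true, false, q).real {b} = if b then (q : ℝ) else 1 - q := by
  cases b <;> simp

variable (p : ℕ → unitInterval) {n : ℕ}

theorem measureReal_graphMeasure_pi_singleton (F : Finset (EdgeIdx n)) (ω : Sample n) :
    (graphMeasure p n).real ((F : Set (EdgeIdx n)).pi fun e => {ω e}) =
      ∏ e ∈ F, if ω e then (p (edgeLength e) : ℝ) else 1 - p (edgeLength e) := by
  simp only [graphMeasure, Measure.real, Measure.pi_pi_finset, ENNReal.toReal_prod]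
  exact Finset.prod_congr rfl fun e _ => bernoulliMeasure_real_singleton _ _

theorem measureReal_graphMeasure_singleton (ω : Sample n) :
    (graphMeasure p n).real {ω} = sampleWeight (fun d => p d) ω := by
  rw [← Set.univ_pi_singleton, ← Finset.coe_univ]
  exact measureReal_graphMeasure_pi_singleton p _ ω

theorem Pr_eq_measureReal (P : Sample n → Prop) :
    Pr (fun d => p d) n P = (graphMeasure p n).real {ω | P ω} := by
  classical
  rw [Pr, ← Finset.sum_filter]
  simp_rw [← measureReal_graphMeasure_singleton]
  rw [sum_measureReal_singleton]
  simp

end GraphMeasure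

section Edges

variable (n : ℕ) (B C : Finset ℕ)

/-- The potential edges on `[n]` with at least one endpoint in `B`. -/
def incidentEdges : Finset (EdgeIdx n) := {e | e.1.1.val ∈ B ∨ e.1.2.val ∈ B}

/-- The potential edges on `[n]` with both endpoints in `B`. -/
def internalEdges : Finset (EdgeIdx n) := {e | e.1.1.val ∈ B ∧ e.1.2.val ∈ B}

variable {n B C}

theorem mem_incidentEdges {e : EdgeIdx n} :
    e ∈ incidentEdges n B ↔ e.1.1.val ∈ B ∨ e.1.2.val ∈ B := by
  simp [incidentEdges]

theorem mem_internalEdges {e : EdgeIdx n} :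
    e ∈ internalEdges n B ↔ e.1.1.val ∈ B ∧ e.1.2.val ∈ B := by
  simp [internalEdges]

theorem edgeIdx_ext {e f : EdgeIdx n} (h₁ : e.1.1.val = f.1.1.val) (h₂ : e.1.2.val = f.1.2.val) :
    e = f :=
  Subtype.ext (Prod.ext (Fin.ext h₁) (Fin.ext h₂))

theorem internalEdges_subset_incidentEdges : internalEdges n B ⊆ incidentEdges n B :=
  fun _ he => mem_incidentEdges.2 (.inl (mem_internalEdges.1 he).1)

/-- The exponent arises since each vertex of `B` has at most two edges of any given length. -/
theorem prod_pow_le_prod_boundary {f : ℕ → ℝ} (hf : ∀ d, f d ∈ Set.Icc 0 1) :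
    (∏ d ∈ Finset.Icc 1 n, f d) ^ (2 * B.card) ≤
      ∏ e ∈ incidentEdges n B \ internalEdges n B, f (edgeLength e) := by
  let code (e : EdgeIdx n) : (ℕ × Bool) × ℕ :=
    (if e.1.1.val ∈ B then (e.1.1.val, true) else (e.1.2.val, false), edgeLength e)
  calc (∏ d ∈ Finset.Icc 1 n, f d) ^ (2 * B.card)
      = ∏ x ∈ (B ×ˢ (Finset.univ : Finset Bool)) ×ˢ Finset.Icc 1 n, f x.2 := by
        rw [Finset.prod_product]
        simp [mul_comm]
    _ ≤ ∏ e ∈ incidentEdges n B \ internalEdges n B, f (code e).2 := by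
        refine prod_le_prod_comp_of_injOn (f := code) (g := fun x => f x.2) (fun e he => ?_)
          (fun e _ e' _ hee' => ?_) (fun x _ => (hf x.2).1) fun x _ => (hf x.2).2
        · simp only [Finset.mem_coe, Finset.mem_sdiff, mem_incidentEdges] at he
          simp only [Finset.mem_coe, Finset.mem_product, Finset.mem_univ, and_true]
          exact ⟨by grind, edgeLength_mem_Icc e⟩
        · have hlt : e.1.1.val < e.1.2.val := e.2
          have hlt' : e'.1.1.val < e'.1.2.val := e'.2
          simp only [code, edgeLength, Prod.mk.injEq] at hee'
          apply edgeIdx_ext <;> grind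

theorem card_incidentEdges_inter_le (hBC : Disjoint B C) :
    (incidentEdges n B ∩ incidentEdges n C).card ≤ B.card * C.card := by
  let cross (e : EdgeIdx n) : ℕ × ℕ :=
    if e.1.1.val ∈ B then (e.1.1.val, e.1.2.val) else (e.1.2.val, e.1.1.val)
  rw [Finset.disjoint_left] at hBC
  rw [← Finset.card_product]
  refine Finset.card_le_card_of_injOn cross (fun e he => ?_) fun e _ e' _ hee' => ?_
  · simp only [Finset.coe_inter, Set.mem_inter_iff, Finset.mem_coe, mem_incidentEdges] at he
    simp only [cross, Finset.coe_product, Set.mem_prod, Finset.mem_coe]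
    grind
  · have hlt : e.1.1.val < e.1.2.val := e.2
    have hlt' : e'.1.1.val < e'.1.2.val := e'.2
    simp only [cross] at hee'
    apply edgeIdx_ext <;> grind

end Edges

section CopyEvent

open MeasureTheory ProbabilityTheory

variable {k n i j : ℕ} (H : Sample k)

/-- The potential edge of `[n]` obtained by translating a potential edge of `[k]` by `i`. -/
def shiftEdge (hi : i + k ≤ n) : EdgeIdx k ↪ EdgeIdx n where
  toFun e := ⟨(⟨i + e.1.1, by omega⟩, ⟨i + e.1.2, by omega⟩), by
    simpa only [Fin.lt_def, add_lt_add_iff_left] using e.2⟩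
  inj' e f h := by
    simp only [Subtype.mk.injEq, Prod.mk.injEq, Fin.mk.injEq, add_right_inj] at h
    exact edgeIdx_ext h.1 h.2

@[simp]
theorem val_fst_shiftEdge (hi : i + k ≤ n) (e : EdgeIdx k) :
    (shiftEdge hi e).1.1.val = i + e.1.1.val :=
  rfl

@[simp]
theorem val_snd_shiftEdge (hi : i + k ≤ n) (e : EdgeIdx k) :
    (shiftEdge hi e).1.2.val = i + e.1.2.val :=
  rfl

theorem edgeLength_shiftEdge (hi : i + k ≤ n) (e : EdgeIdx k) :
    edgeLength (shiftEdge hi e) = edgeLength e :=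
  Nat.add_sub_add_left i e.1.2 e.1.1

theorem internalEdges_Ico (hi : i + k ≤ n) :
    internalEdges n (Finset.Ico i (i + k)) = Finset.univ.map (shiftEdge hi) := by
  ext e
  simp only [mem_internalEdges, Finset.mem_Ico, Finset.mem_map, Finset.mem_univ, true_and]
  have hlt : e.1.1.val < e.1.2.val := e.2
  constructor
  · intro h
    refine ⟨⟨(⟨e.1.1 - i, by omega⟩, ⟨e.1.2 - i, by omega⟩), ?_⟩, edgeIdx_ext ?_ ?_⟩ <;>
      simp only [Fin.mk_lt_mk, val_fst_shiftEdge, val_snd_shiftEdge] <;> omega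
  · rintro ⟨e', rfl⟩
    simp

variable (n i) in
/-- The graph on `[n]` whose edges are exactly the edges of `H`, translated by `i`. -/
def translate : Sample n :=
  fun e => decide (∃ e', H e' = true ∧ i + e'.1.1.val = e.1.1.val ∧ i + e'.1.2.val = e.1.2.val)

theorem translate_shiftEdge (hi : i + k ≤ n) (e : EdgeIdx k) :
    translate n i H (shiftEdge hi e) = H e := by
  have unique (e' : EdgeIdx k) (h₁ : i + e'.1.1.val = i + e.1.1.val)
      (h₂ : i + e'.1.2.val = i + e.1.2.val) : e' = e :=
    edgeIdx_ext (Nat.add_left_cancel h₁) (Nat.add_left_cancel h₂)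
  rw [translate, Bool.eq_iff_iff, decide_eq_true_eq]
  exact ⟨fun ⟨e', he', h₁, h₂⟩ => unique e' h₁ h₂ ▸ he', fun he => ⟨e, he, rfl, rfl⟩⟩

variable {H} in
theorem mem_internalEdges_of_translate {e : EdgeIdx n} (he : translate n i H e = true) :
    e ∈ internalEdges n (Finset.Ico i (i + k)) := by
  obtain ⟨e', -, h₁, h₂⟩ := of_decide_eq_true he
  simp only [mem_internalEdges, Finset.mem_Ico]
  omega

variable (n i) in
/-- The event that `H` has an exact copy at the vertices `i + 1, …, i + k`, written as a cylinder:
the edges incident to these vertices are those of `translate n i H`. -/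
def copyEvent : Set (Sample n) :=
  (incidentEdges n (Finset.Ico i (i + k)) : Set (EdgeIdx n)).pi fun e => {translate n i H e}

variable {H} in
theorem isExactCopyAt_of_mem_copyEvent (hi : i + k ≤ n) {ω : Sample n}
    (hω : ω ∈ copyEvent n i H) : IsExactCopyAt H ω i := by
  have agree (e) (he : e ∈ incidentEdges n (Finset.Ico i (i + k))) :
      ω e = translate n i H e := hω e he
  refine ⟨hi, fun a b ha _ => ⟨?_, ?_⟩, ?_⟩
  · rintro ⟨e, he, hab⟩
    refine ⟨shiftEdge hi e, ?_, by simpa using hab⟩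
    rw [agree, translate_shiftEdge, he]
    exact internalEdges_subset_incidentEdges (internalEdges_Ico hi ▸ by simp)
  · rintro ⟨e, he, hab⟩
    rw [agree e (by simp only [mem_incidentEdges, Finset.mem_Ico]; omega)] at he
    obtain ⟨e', he', h₁, h₂⟩ := of_decide_eq_true he
    exact ⟨e', he', by omega⟩
  · have no_boundary (e : EdgeIdx n) (he : ω e = true) :
        e.1.1.val ∈ Finset.Ico i (i + k) ↔ e.1.2.val ∈ Finset.Ico i (i + k) := by
      by_cases hB : e ∈ incidentEdges n (Finset.Ico i (i + k))
      · have both := mem_internalEdges.1 (mem_internalEdges_of_translate (agree e hB ▸ he))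
        exact iff_of_true both.1 both.2
      · rw [mem_incidentEdges, not_or] at hB
        exact iff_of_false hB.1 hB.2
    simp only [Finset.mem_Ico] at no_boundary
    rintro v w ⟨e, he, ⟨rfl, rfl⟩ | ⟨rfl, rfl⟩⟩
    · exact no_boundary e he
    · exact (no_boundary e he).symm

variable (p : ℕ → unitInterval)

theorem le_measureReal_copyEvent (hi : i + k ≤ n) :
    sampleWeight (fun d => p d) H * (∏ d ∈ Finset.Icc 1 n, (1 - (p d : ℝ))) ^ (2 * k) ≤
      (graphMeasure p n).real (copyEvent n i H) := by
  have internal_eq : ∏ e ∈ internalEdges n (Finset.Ico i (i + k)),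
      (if translate n i H e then (p (edgeLength e) : ℝ) else 1 - p (edgeLength e)) =
        sampleWeight (fun d => p d) H := by
    simp only [internalEdges_Ico hi, Finset.prod_map, translate_shiftEdge, edgeLength_shiftEdge]
    rfl
  have boundary_eq (e)
      (he : e ∈ incidentEdges n (Finset.Ico i (i + k)) \ internalEdges n (Finset.Ico i (i + k))) :
      (if translate n i H e then (p (edgeLength e) : ℝ) else 1 - p (edgeLength e)) =
        1 - p (edgeLength e) :=
    if_neg fun h => (Finset.mem_sdiff.1 he).2 (mem_internalEdges_of_translate h)
  have boundary_ge := prod_pow_le_prod_boundary (n := n) (B := Finset.Ico i (i + k))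
    (f := fun d => 1 - (p d : ℝ)) fun d => (unitInterval.symm (p d)).2
  rw [Nat.card_Ico, Nat.add_sub_cancel_left] at boundary_ge
  have weight_nonneg : 0 ≤ sampleWeight (fun d => p d) H :=
    measureReal_graphMeasure_singleton p H ▸ measureReal_nonneg
  rw [copyEvent, measureReal_graphMeasure_pi_singleton,
    ← Finset.prod_sdiff internalEdges_subset_incidentEdges, internal_eq,
    Finset.prod_congr rfl boundary_eq, mul_comm]
  gcongr

theorem translate_eq_false_of_mem_incidentEdges {C : Finset ℕ} {e : EdgeIdx n}
    (hC : Disjoint (Finset.Ico i (i + k)) C) (he : e ∈ incidentEdges n C) :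
    translate n i H e = false := by
  rw [← Bool.not_eq_true]
  intro htrue
  rw [Finset.disjoint_left] at hC
  have hint := mem_internalEdges.1 (mem_internalEdges_of_translate htrue)
  exact (mem_incidentEdges.1 he).elim (hC hint.1) (hC hint.2)

theorem measureReal_copyEvent_inter_le {δ : ℝ} (hδ : δ ∈ Set.Icc 0 1)
    (hij : Disjoint (Finset.Ico i (i + k)) (Finset.Ico j (j + k)))
    (hcommon : ∀ e ∈
      incidentEdges n (Finset.Ico i (i + k)) ∩ incidentEdges n (Finset.Ico j (j + k)),
      (p (edgeLength e) : ℝ) ≤ δ) :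
    (1 - δ) ^ (k * k) * (graphMeasure p n).real (copyEvent n i H ∩ copyEvent n j H) ≤
      (graphMeasure p n).real (copyEvent n i H) * (graphMeasure p n).real (copyEvent n j H) := by
  set E := incidentEdges n (Finset.Ico i (i + k)) ∩ incidentEdges n (Finset.Ico j (j + k))
  have absent_left (e) (he : e ∈ E) : translate n i H e = false :=
    translate_eq_false_of_mem_incidentEdges H hij (Finset.mem_inter.1 he).2
  have absent_right (e) (he : e ∈ E) : translate n j H e = false :=
    translate_eq_false_of_mem_incidentEdges H hij.symm (Finset.mem_inter.1 he).1
  have card_le : E.card ≤ k * k := by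
    simpa using card_incidentEdges_inter_le (n := n) hij
  have absent_ge : (1 - δ) ^ (k * k) ≤
      ∏ e ∈ E, Ber(true, false, p (edgeLength e)).real {translate n i H e} := by
    calc (1 - δ) ^ (k * k) ≤ (1 - δ) ^ E.card :=
          pow_le_pow_of_le_one (sub_nonneg.2 hδ.2) (sub_le_self 1 hδ.1) card_le
      _ = ∏ e ∈ E, (1 - δ) := (Finset.prod_const _).symm
      _ ≤ _ := Finset.prod_le_prod (fun _ _ => sub_nonneg.2 hδ.2) fun e he => by
          rw [bernoulliMeasure_real_singleton, absent_left e he]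
          exact sub_le_sub_left (hcommon e he) 1
  have factorization := measureReal_pi_inter_mul_prod
    (fun e : EdgeIdx n => Ber(true, false, p (edgeLength e)))
    (s := fun e => {translate n i H e}) (t := fun e => {translate n j H e})
    fun e he => congrArg _ ((absent_left e he).trans (absent_right e he).symm)
  rw [copyEvent, copyEvent, graphMeasure, ← factorization, mul_comm]
  gcongr

end CopyEvent

section Blocks

open MeasureTheory ProbabilityTheory Finset

variable {k n : ℕ}

/-- The `a`-th of the consecutive vertex blocks of length `k`. -/
def block (k a : ℕ) : Finset ℕ := Ico (k * a) (k * a + k)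

theorem div_eq_of_mem_block {a x : ℕ} (hx : x ∈ block k a) : x / k = a := by
  rw [block, Finset.mem_Ico] at hx
  exact Nat.div_eq_of_lt_le (by linarith) (by linarith)

theorem disjoint_block {a b : ℕ} (hab : a ≠ b) : Disjoint (block k a) (block k b) :=
  Finset.disjoint_left.2 fun _ ha hb =>
    hab ((div_eq_of_mem_block ha).symm.trans (div_eq_of_mem_block hb))

variable (n) in
/-- The blocks `a` and `b` coincide, or some potential edge with length in `D` meets both. -/
def BlocksLinked (k : ℕ) (D : Finset ℕ) (a b : ℕ) : Prop :=
  a = b ∨ ∃ e ∈ incidentEdges n (block k a) ∩ incidentEdges n (block k b), edgeLength e ∈ D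

open scoped Classical in
theorem card_filter_blocksLinked_le (T D : Finset ℕ) (a : ℕ) :
    #{b ∈ T | BlocksLinked n k D a b} ≤ 1 + 2 * k * #D := by
  let reached (x : ℕ × ℕ × Bool) : ℕ := (if x.2.2 then x.1 + x.2.1 else x.1 - x.2.1) / k
  have subset : {b ∈ T | BlocksLinked n k D a b} ⊆
      insert a ((block k a ×ˢ D ×ˢ univ).image reached) := by
    intro b hb
    rw [mem_insert, mem_image, or_iff_not_imp_left]
    intro hba
    obtain rfl | ⟨e, he, hD⟩ := (mem_filter.1 hb).2
    · exact absurd rfl hba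
    have hlt : e.1.1.val < e.1.2.val := e.2
    simp only [mem_inter, mem_incidentEdges] at he
    have hdisj := Finset.disjoint_left.1 (disjoint_block (k := k) (Ne.symm hba))
    have cross : (e.1.1.val ∈ block k a ∧ e.1.2.val ∈ block k b) ∨
        (e.1.2.val ∈ block k a ∧ e.1.1.val ∈ block k b) := by grind
    obtain ⟨ha, hb⟩ | ⟨ha, hb⟩ := cross
    · refine ⟨(e.1.1.val, edgeLength e, true), by simp [ha, hD], ?_⟩
      simp [reached, edgeLength, hlt.le, div_eq_of_mem_block hb]
    · refine ⟨(e.1.2.val, edgeLength e, false), by simp [ha, hD], ?_⟩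
      simp [reached, edgeLength, Nat.sub_sub_self hlt.le, div_eq_of_mem_block hb]
  calc #{b ∈ T | BlocksLinked n k D a b}
      ≤ #((block k a ×ˢ D ×ˢ univ).image reached) + 1 :=
        (card_le_card subset).trans (card_insert_le _ _)
    _ ≤ #(block k a ×ˢ D ×ˢ (univ : Finset Bool)) + 1 := by gcongr; exact card_image_le
    _ = 1 + 2 * k * #D := by
        rw [card_product, card_product, block, Nat.card_Ico, card_univ, Fintype.card_bool]
        lia

variable (H : Sample k) (p : ℕ → unitInterval)

open scoped Classical in
theorem one_sub_le_measureReal_half_mean_le_card_copyEvent {δ : ℝ} (hδ : δ ∈ Set.Ico 0 1)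
    (T : Finset ℕ) (hpos : 0 < ∑ a ∈ T, (graphMeasure p n).real (copyEvent n (k * a) H)) :
    1 - 4 * ((1 + 2 * k * #{d ∈ Icc 1 n | δ < p d}) /
        ∑ a ∈ T, (graphMeasure p n).real (copyEvent n (k * a) H) + (((1 - δ) ^ (k * k))⁻¹ - 1)) ≤
      (graphMeasure p n).real {ω |
        (∑ a ∈ T, (graphMeasure p n).real (copyEvent n (k * a) H)) / 2 ≤
          #{a ∈ T | ω ∈ copyEvent n (k * a) H}} := by
  have hδ' : 0 < 1 - δ := sub_pos.2 hδ.2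
  have slack_nonneg : 0 ≤ ((1 - δ) ^ (k * k))⁻¹ - 1 :=
    sub_nonneg.2 ((one_le_inv₀ (by positivity)).2 (pow_le_one₀ hδ'.le (sub_le_self 1 hδ.1)))
  have unlinked (a b : ℕ) (hab : ¬ BlocksLinked n k {d ∈ Icc 1 n | δ < p d} a b) :
      (graphMeasure p n).real (copyEvent n (k * a) H ∩ copyEvent n (k * b) H) ≤
        (1 + (((1 - δ) ^ (k * k))⁻¹ - 1)) * ((graphMeasure p n).real (copyEvent n (k * a) H) *
          (graphMeasure p n).real (copyEvent n (k * b) H)) := by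
    rw [BlocksLinked, not_or] at hab
    rw [add_sub_cancel, ← div_eq_inv_mul, le_div_iff₀' (by positivity)]
    refine measureReal_copyEvent_inter_le H p ⟨hδ.1, hδ.2.le⟩ (disjoint_block hab.1) fun e he => ?_
    by_contra! hlong
    exact hab.2 ⟨e, he, mem_filter.2 ⟨edgeLength_mem_Icc e, hlong⟩⟩
  exact_mod_cast one_sub_le_measureReal_half_mean_le_card (fun _ => .of_discrete) slack_nonneg
    (fun a _ => card_filter_blocksLinked_le T _ a) (fun a _ b _ => unlinked a b) hpos

/-- `ω` contains at least `r` pairwise vertex-disjoint exact copies of `H`, none of which has a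
vertex smaller than `ℓ` or larger than `n - ℓ`. The set `S` holds the offsets of the copies. -/
def HasManyExactCopies (r ℓ : ℝ) (ω : Sample n) : Prop :=
  ∃ S : Finset ℕ,
    r ≤ S.card ∧
    (∀ i ∈ S, IsExactCopyAt H ω i) ∧
    (∀ i ∈ S, ∀ j ∈ S, i ≠ j → i + k ≤ j ∨ j + k ≤ i) ∧
    (∀ i ∈ S, ℓ ≤ (i + 1 : ℝ) ∧ ((i : ℝ) + k ≤ (n : ℝ) - ℓ))

/-- The indices of the blocks of length `k` in the second quarter of `[n]`. -/
def middleBlocks (n k : ℕ) : Finset ℕ := Ico (n / (4 * k)) (2 * (n / (4 * k)))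

theorem div_le_card_middleBlocks (hk : 0 < k) (hn : 8 * k ≤ n) :
    (n : ℝ) / (8 * k) ≤ #(middleBlocks n k) := by
  have hlt : n < 4 * k * (n / (4 * k) + 1) := Nat.lt_mul_div_succ n (by positivity)
  have hcard : n ≤ #(middleBlocks n k) * (8 * k) := by
    rw [middleBlocks, Nat.card_Ico, two_mul, Nat.add_sub_cancel]
    nlinarith
  rw [div_le_iff₀ (by positivity)]
  exact_mod_cast hcard

theorem mul_bounds_of_mem_middleBlocks (hk : 0 < k) (hn : 8 * k ≤ n) {a : ℕ}
    (ha : a ∈ middleBlocks n k) : n ≤ 8 * (k * a) ∧ 2 * (k * a + k) ≤ n := by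
  have lower : n < 4 * k * (n / (4 * k) + 1) := Nat.lt_mul_div_succ n (by positivity)
  have upper : 4 * k * (n / (4 * k)) ≤ n := Nat.mul_div_le n (4 * k)
  rw [middleBlocks, Finset.mem_Ico] at ha
  constructor <;> nlinarith

variable {H} in
open scoped Classical in
theorem hasManyExactCopies_of_le_card (hk : 0 < k) (hn : 8 * k ≤ n) {r ℓ : ℝ} (hℓ : ℓ ≤ n / 8)
    {ω : Sample n} (hr : r ≤ #{a ∈ middleBlocks n k | ω ∈ copyEvent n (k * a) H}) :
    HasManyExactCopies H r ℓ ω := by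
  refine ⟨image (k * ·) {a ∈ middleBlocks n k | ω ∈ copyEvent n (k * a) H}, ?_, ?_, ?_, ?_⟩
  · rwa [card_image_of_injective _ (mul_right_injective₀ hk.ne')]
  · simp only [forall_mem_image, mem_filter]
    intro a ⟨ha, hω⟩
    have := mul_bounds_of_mem_middleBlocks hk hn ha
    exact isExactCopyAt_of_mem_copyEvent (by omega) hω
  · simp only [forall_mem_image]
    intro a _ b _ hab
    rcases lt_or_gt_of_ne (ne_of_apply_ne (k * ·) hab) with h | h
    · exact .inl (Nat.mul_le_mul_left k h)
    · exact .inr (Nat.mul_le_mul_left k h)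
  · simp only [forall_mem_image, mem_filter]
    intro a ⟨ha, _⟩
    obtain ⟨hlow, hhigh⟩ := mul_bounds_of_mem_middleBlocks hk hn ha
    have hlow' : (n : ℝ) ≤ 8 * (k * a : ℕ) := by exact_mod_cast hlow
    have hhigh' : 2 * ((k * a : ℕ) + (k : ℝ)) ≤ n := by exact_mod_cast hhigh
    constructor <;> linarith

end Blocks

section Limit

open MeasureTheory Finset Asymptotics

variable {k : ℕ} {H : Sample k} {α : ℝ}

section FixedSize

variable {n : ℕ} {p : ℕ → unitInterval}

theorem mul_card_filter_lt_le {δ : ℝ} (hn : 0 < n)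
    (hprod : (n : ℝ) ^ (-α) ≤ ∏ d ∈ Icc 1 n, (1 - (p d : ℝ))) :
    δ * #{d ∈ Icc 1 n | δ < p d} ≤ α * Real.log n := by
  have bound := hprod.trans (prod_one_sub_le_exp_neg_mul_card δ fun d _ => (p d).2)
  rw [Real.rpow_def_of_pos (by positivity), Real.exp_le_exp] at bound
  linarith

theorem le_sum_measureReal_copyEvent (hk : 0 < k) (hn : 8 * k ≤ n)
    (hprod : (n : ℝ) ^ (-α) ≤ ∏ d ∈ Icc 1 n, (1 - (p d : ℝ))) :
    sampleWeight (fun d => p d) H / (8 * k) * (n : ℝ) ^ (1 - 2 * k * α) ≤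
      ∑ a ∈ middleBlocks n k, (graphMeasure p n).real (copyEvent n (k * a) H) := by
  have hn₀ : (0 : ℝ) < n := by exact_mod_cast (by omega : 0 < n)
  have weight_nonneg : 0 ≤ sampleWeight (fun d => p d) H :=
    measureReal_graphMeasure_singleton p H ▸ measureReal_nonneg
  have power_eq : (n : ℝ) ^ (1 - 2 * k * α) = n * ((n : ℝ) ^ (-α)) ^ (2 * k) := by
    rw [← Real.rpow_mul_natCast hn₀.le, sub_eq_add_neg, Real.rpow_add hn₀, Real.rpow_one]
    push_cast
    ring_nf
  calc sampleWeight (fun d => p d) H / (8 * k) * (n : ℝ) ^ (1 - 2 * k * α)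
      = n / (8 * k) * (sampleWeight (fun d => p d) H * ((n : ℝ) ^ (-α)) ^ (2 * k)) := by
        rw [power_eq]
        ring
    _ ≤ #(middleBlocks n k) * (sampleWeight (fun d => p d) H *
          (∏ d ∈ Icc 1 n, (1 - (p d : ℝ))) ^ (2 * k)) := by
        gcongr
        exact div_le_card_middleBlocks hk hn
    _ ≤ ∑ a ∈ middleBlocks n k, (graphMeasure p n).real (copyEvent n (k * a) H) := by
        rw [← nsmul_eq_mul]
        exact card_nsmul_le_sum _ _ _ fun a ha =>
          le_measureReal_copyEvent H p (by have := mul_bounds_of_mem_middleBlocks hk hn ha; omega)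

theorem one_sub_le_Pr_hasManyExactCopies (hk : 0 < k) (hn : 8 * k ≤ n) {δ r ℓ : ℝ}
    (hδ : δ ∈ Set.Ioo 0 1) (hH : 0 < sampleWeight (fun d => p d) H)
    (hprod : (n : ℝ) ^ (-α) ≤ ∏ d ∈ Icc 1 n, (1 - (p d : ℝ)))
    (hr : r ≤ sampleWeight (fun d => p d) H / (8 * k) * (n : ℝ) ^ (1 - 2 * k * α) / 2)
    (hℓ : ℓ ≤ n / 8) :
    1 - 4 * ((1 + 2 * k * (α * Real.log n / δ)) /
        (sampleWeight (fun d => p d) H / (8 * k) * (n : ℝ) ^ (1 - 2 * k * α)) +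
          (((1 - δ) ^ (k * k))⁻¹ - 1)) ≤
      Pr (fun d => p d) n (HasManyExactCopies H r ℓ) := by
  classical
  have hn₀ : 0 < n := by omega
  have mean_ge := le_sum_measureReal_copyEvent (H := H) hk hn hprod
  have mean_pos := lt_of_lt_of_le (by positivity) mean_ge
  have card_le : (#{d ∈ Icc 1 n | δ < p d} : ℝ) ≤ α * Real.log n / δ :=
    (le_div_iff₀' hδ.1).2 (mul_card_filter_lt_le hn₀ hprod)
  have ratio_nonneg : 0 ≤ α * Real.log n / δ := le_trans (by positivity) card_le
  rw [Pr_eq_measureReal]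
  calc _ ≤ 1 - 4 * ((1 + 2 * k * #{d ∈ Icc 1 n | δ < p d}) /
        ∑ a ∈ middleBlocks n k, (graphMeasure p n).real (copyEvent n (k * a) H) +
          (((1 - δ) ^ (k * k))⁻¹ - 1)) := by gcongr
    _ ≤ _ := one_sub_le_measureReal_half_mean_le_card_copyEvent H p (Set.Ioo_subset_Ico_self hδ)
        (middleBlocks n k) mean_pos
    _ ≤ _ := measureReal_mono fun ω hω => hasManyExactCopies_of_le_card hk hn hℓ <|
        hr.trans <| (div_le_div_of_nonneg_right mean_ge zero_le_two).trans hω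

end FixedSize

theorem tendsto_log_natCast_atTop : Tendsto (fun n : ℕ => Real.log n) atTop atTop :=
  Real.tendsto_log_atTop.comp tendsto_natCast_atTop_atTop

theorem isLittleO_rpow_rpow_atTop {a b : ℝ} (hab : a < b) :
    (fun x : ℝ => x ^ a) =o[atTop] fun x => x ^ b := by
  have hratio : Tendsto (fun x : ℝ => x ^ (-(b - a))) atTop (nhds 0) :=
    tendsto_rpow_neg_atTop (sub_pos.2 hab)
  refine isLittleO_of_tendsto' ?_ (hratio.congr' ?_)
  · filter_upwards [eventually_gt_atTop 0] with x hx hzero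
    exact absurd hzero (Real.rpow_pos_of_pos hx b).ne'
  · filter_upwards [eventually_gt_atTop 0] with x hx
    rw [neg_sub, Real.rpow_sub hx]

theorem tendsto_one_add_mul_log_div_rpow {b c β : ℝ} (hβ : 0 < β) :
    Tendsto (fun n : ℕ => (1 + b * (α * Real.log n / (Real.log n)⁻¹)) / (c * (n : ℝ) ^ β))
      atTop (nhds 0) := by
  have hpow : Tendsto (fun n : ℕ => (n : ℝ) ^ β) atTop atTop :=
    (tendsto_rpow_atTop hβ).comp tendsto_natCast_atTop_atTop
  have hlog : Tendsto (fun n : ℕ => Real.log n ^ 2 / (n : ℝ) ^ β) atTop (nhds 0) := by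
    have h := ((isLittleO_log_rpow_rpow_atTop 2 hβ).comp_tendsto tendsto_natCast_atTop_atTop)
    simpa [Function.comp_def] using h.tendsto_div_nhds_zero
  have hsum := ((hpow.inv_tendsto_atTop.add (hlog.const_mul (b * α))).const_mul c⁻¹)
  simp only [mul_zero, add_zero] at hsum
  refine hsum.congr fun n => ?_
  simp only [Pi.inv_apply, div_inv_eq_mul]
  ring

theorem tendsto_inv_one_sub_pow_sub_one {δ : ℕ → ℝ} (hδ : Tendsto δ atTop (nhds 0)) (m : ℕ) :
    Tendsto (fun n => ((1 - δ n) ^ m)⁻¹ - 1) atTop (nhds 0) := by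
  have h := ((hδ.const_sub 1).pow m).inv₀ (by simp) |>.sub_const 1
  simpa using h

theorem statement_3_general {k : ℕ} (hk : 0 < k) {p : ℕ → ℝ} (hp : ∀ d, p d ∈ Set.Icc 0 1)
    {α : ℝ} (hα : 2 * k * α < 1)
    (hprod : ∀ᶠ n : ℕ in atTop, (n : ℝ) ^ (-α) ≤ ∏ d ∈ Icc 1 n, (1 - p d))
    {H : Sample k} (hH : 0 < sampleWeight p H) {r ℓ : ℕ → ℝ}
    (hr : r =o[atTop] fun n => (n : ℝ) ^ (1 - 2 * k * α))
    (hℓ : ℓ =o[atTop] fun n => (n : ℝ)) :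
    Tendsto (fun n => Pr p n (HasManyExactCopies H (r n) (ℓ n))) atTop (nhds 1) := by
  lift p to ℕ → unitInterval using hp
  set c := sampleWeight (fun d => p d) H / (8 * k)
  have hc : 0 < c := by positivity
  have hδ : Tendsto (fun n : ℕ => (Real.log n)⁻¹) atTop (nhds 0) :=
    tendsto_inv_atTop_zero.comp tendsto_log_natCast_atTop
  have error := (tendsto_one_add_mul_log_div_rpow (α := α) (b := 2 * k) (c := c)
    (sub_pos.2 hα)).add (tendsto_inv_one_sub_pow_sub_one hδ (k * k))
  have lower := (error.const_mul 4).const_sub 1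
  simp only [add_zero, mul_zero, sub_zero] at lower
  refine tendsto_of_tendsto_of_tendsto_of_le_of_le' lower tendsto_const_nhds ?_ ?_
  · filter_upwards [hprod, hr.def (half_pos hc), hℓ.def (by norm_num : (0 : ℝ) < 1 / 8),
      eventually_ge_atTop (8 * k), tendsto_log_natCast_atTop.eventually_gt_atTop 1]
      with n hprod hr hℓ hn hlog
    have hδ_mem : (Real.log n)⁻¹ ∈ Set.Ioo 0 1 := ⟨by positivity, inv_lt_one_of_one_lt₀ hlog⟩
    rw [Real.norm_of_nonneg (Real.rpow_nonneg n.cast_nonneg _)] at hr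
    rw [Real.norm_natCast] at hℓ
    refine one_sub_le_Pr_hasManyExactCopies hk hn hδ_mem hH hprod ?_ ?_
    · exact (Real.le_norm_self (r n)).trans (hr.trans_eq (div_mul_eq_mul_div c 2 _))
    · linarith [Real.le_norm_self (ℓ n)]
  · exact .of_forall fun n => Pr_eq_measureReal p _ ▸ measureReal_le_one

end Limit

/-- the Lemma.  Let `k ≥ 1` and let `p̄` with `0 ≤ p i < 1` satisfy
`∏_{i=1}^n (1 - p i) ≥ n ^ (-1/(10k))`.  If `H` is an admissible graph on `[k]` (i.e. the
probability `sampleWeight p H` that `G(k, p̄) = H` is positive), then with probability tending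
to `1` the graph `G(n, p̄)` contains at least `n^0.1` pairwise vertex-disjoint exact copies
of `H`, none of them containing vertices smaller than `log n` or larger than `n - log n`. -/
theorem statement_3 (k : ℕ) (hk : 1 ≤ k) (p : ℕ → ℝ) (hp : ∀ i, 0 ≤ p i ∧ p i < 1)
    (hprod : ∀ n : ℕ, 1 ≤ n →
      (n : ℝ) ^ ((-1 : ℝ) / (10 * (k : ℝ))) ≤ ∏ i ∈ Finset.Icc 1 n, (1 - p i))
    (H : Sample k) (hH : 0 < sampleWeight p H) :
    Tendsto (fun n => Pr p n fun ω =>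
        ∃ S : Finset ℕ,
          (n : ℝ) ^ (0.1 : ℝ) ≤ (S.card : ℝ) ∧
          (∀ i ∈ S, IsExactCopyAt H ω i) ∧
          (∀ i ∈ S, ∀ j ∈ S, i ≠ j → i + k ≤ j ∨ j + k ≤ i) ∧
          (∀ i ∈ S, Real.log n ≤ (i + 1 : ℝ) ∧ ((i : ℝ) + k ≤ (n : ℝ) - Real.log n)))
      atTop (nhds 1) := by
  have exponent_eq : 2 * (k : ℝ) * (1 / (10 * k)) = 1 / 5 := by field
  refine statement_3_general hk (fun d => ⟨(hp d).1, (hp d).2.le⟩) (α := 1 / (10 * k))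
    (by rw [exponent_eq]; norm_num) ?_ hH ?_ ?_
  · filter_upwards [eventually_ge_atTop 1] with n hn
    simpa only [neg_div] using hprod n hn
  · rw [exponent_eq]
    exact (isLittleO_rpow_rpow_atTop (by norm_num)).comp_tendsto tendsto_natCast_atTop_atTop
  · exact Real.isLittleO_log_id_atTop.comp_tendsto tendsto_natCast_atTop_atTop

end RandomGraph
end

section
/- If the sequence p̄ = (p(1), p(2), …), with 0 ≤ p(i) ≤ 1, contains only finitely many non-zero terms, then for every first-order sentence ψ of the language L_≤ the limit lim_{n→∞} Prob(n,p̄;ψ) exists. -/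
open FirstOrder Filter

namespace RandomGraph

/-!
A graph on `[n]` without edges longer than `D` is a word of length `n` over the alphabet
`Fin D → Bool`, the letter at a vertex recording its edges to the `D` preceding vertices. Whether a
first-order sentence holds depends only on the class of this word modulo a congruence of finite
index for which the powers of every letter are eventually constant: such congruences exist for
atomic formulas, and a quantifier is handled by also comparing the ways to cut a word at one of its
letters. Apart from the first `D` letters, the letters of the random word are independent and
identically distributed, so its class is a Markov chain on a finite set.

The transition operator `P` of this chain is nonexpansive for the sup norm. At a cluster point `g`
of an orbit of `P` the norm of `Pʲ (P g - g)` is the same for all `j`, and a state where it is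
attained propagates along every letter of positive probability. Repeating one such letter ends in a
state at which the increments `Pʲ⁺¹ g - Pʲ g` all have the same extremal value; they telescope to a
bounded quantity, so this value is `0` and the orbit converges to `g`.
-/

section Nonexpansive

variable {X : Type*} {T : X → X}

theorem antitone_dist_iterate [PseudoMetricSpace X] (hT : LipschitzWith 1 T) (x y : X) :
    Antitone fun n => dist (T^[n] x) (T^[n] y) := by
  refine antitone_nat_of_succ_le fun n => ?_
  simpa only [Function.iterate_succ_apply', NNReal.coe_one, one_mul] using
    hT.dist_le_mul (T^[n] x) (T^[n] y)

/-- The displacements `dist (T (Tⁿ x)) (Tⁿ x)` decrease to some `M`, so at a cluster point `y` of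
the orbit all displacements equal `M`; once `y` is fixed, `dist (Tⁿ x) y` is antitone with a
subsequence tending to `0`. -/
theorem exists_tendsto_iterate [MetricSpace X] [ProperSpace X] (hT : LipschitzWith 1 T)
    (hfix : ∀ y, (∀ j, dist (T^[j] (T y)) (T^[j] y) = dist (T y) y) → Function.IsFixedPt T y)
    {x : X} (hx : Bornology.IsBounded (Set.range fun n => T^[n] x)) :
    ∃ y, Tendsto (fun n => T^[n] x) atTop (nhds y) := by
  obtain ⟨y, -, φ, hφ, hy⟩ := tendsto_subseq_of_bounded hx (fun n => Set.mem_range_self n)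
  obtain ⟨M, hM⟩ : ∃ M, Tendsto (fun n => dist (T^[n] (T x)) (T^[n] x)) atTop (nhds M) :=
    ⟨_, tendsto_atTop_ciInf (antitone_dist_iterate hT _ _)
      ⟨0, Set.forall_mem_range.2 fun _ => dist_nonneg⟩⟩
  have displacement_eq (j : ℕ) : dist (T^[j] (T y)) (T^[j] y) = M := by
    have hcont := hT.continuous.iterate j
    have hlim : Tendsto (fun n => dist (T^[j] (T (T^[φ n] x))) (T^[j] (T^[φ n] x))) atTop
        (nhds (dist (T^[j] (T y)) (T^[j] y))) :=
      (((hcont.comp hT.continuous).tendsto y).comp hy).dist ((hcont.tendsto y).comp hy)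
    refine tendsto_nhds_unique hlim ((hM.comp <|
      tendsto_atTop_mono (fun n => Nat.le_add_left (φ n) j) hφ.tendsto_atTop).congr fun n => ?_)
    simp only [Function.comp_apply, Function.iterate_add_apply,
      Function.Commute.iterate_self T (φ n) x]
  have hTy : T y = y :=
    hfix y fun j => (displacement_eq j).trans (displacement_eq 0).symm
  refine ⟨y, tendsto_iff_dist_tendsto_zero.2 ?_⟩
  have hanti : Antitone fun n => dist (T^[n] x) y := by
    simpa only [Function.iterate_fixed hTy] using antitone_dist_iterate hT x y
  exact (tendsto_iff_tendsto_subseq_of_antitone hanti hφ.tendsto_atTop).2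
    (tendsto_iff_dist_tendsto_zero.1 hy)

end Nonexpansive

section Markov

variable {S A : Type*} [Fintype A]

/-- The transition operator of the Markov chain on `S` that moves from `s` to `δ s a` with
probability `μ a`; it sends an observable to its expected value after one step. -/
noncomputable def transitionOp (μ : A → ℝ) (δ : S → A → S) : Module.End ℝ (S → ℝ) :=
  ∑ a, μ a • LinearMap.funLeft ℝ ℝ (δ · a)

variable {μ : A → ℝ} {δ : S → A → S}

theorem transitionOp_apply (f : S → ℝ) (s : S) :
    transitionOp μ δ f s = ∑ a, μ a * f (δ s a) := by
  simp [transitionOp, LinearMap.sum_apply]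

theorem transitionOp_le (hμ : ∀ a, 0 ≤ μ a) (hμ1 : ∑ a, μ a = 1) {f : S → ℝ} {M : ℝ}
    (hf : ∀ s, f s ≤ M) (s : S) : transitionOp μ δ f s ≤ M :=
  calc transitionOp μ δ f s = ∑ a, μ a * f (δ s a) := transitionOp_apply f s
    _ ≤ ∑ a, μ a * M := by gcongr with a; exacts [hμ a, hf _]
    _ = M := by rw [← Finset.sum_mul, hμ1, one_mul]

theorem transitionOp_pow_le (hμ : ∀ a, 0 ≤ μ a) (hμ1 : ∑ a, μ a = 1) {f : S → ℝ} {M : ℝ}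
    (hf : ∀ s, f s ≤ M) (n : ℕ) (s : S) : (transitionOp μ δ ^ n) f s ≤ M := by
  induction n generalizing s with
  | zero => exact hf s
  | succ n ih => rw [pow_succ']; exact transitionOp_le hμ hμ1 ih s

theorem apply_eq_of_transitionOp_eq (hμ : ∀ a, 0 ≤ μ a) (hμ1 : ∑ a, μ a = 1) {f : S → ℝ} {M : ℝ}
    (hf : ∀ s, f s ≤ M) {s : S} (hs : transitionOp μ δ f s = M) {a : A} (ha : 0 < μ a) :
    f (δ s a) = M := by
  have hsum : ∑ a, μ a * (M - f (δ s a)) = 0 := by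
    rw [transitionOp_apply] at hs
    simp only [mul_sub, Finset.sum_sub_distrib, ← Finset.sum_mul, hμ1, hs, one_mul, sub_self]
  have hzero := (Finset.sum_eq_zero_iff_of_nonneg fun b _ =>
    mul_nonneg (hμ b) (sub_nonneg.2 (hf (δ s b)))).1 hsum a (Finset.mem_univ a)
  linarith [(mul_eq_zero.1 hzero).resolve_left ha.ne']

theorem transitionOp_pow_apply_iterate_eq (hμ : ∀ a, 0 ≤ μ a) (hμ1 : ∑ a, μ a = 1)
    {f : S → ℝ} {M : ℝ} (hf : ∀ s, f s ≤ M) {m k : ℕ} {s : S}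
    (hs : (transitionOp μ δ ^ (m + k)) f s = M) {a : A} (ha : 0 < μ a) :
    (transitionOp μ δ ^ m) f ((δ · a)^[k] s) = M := by
  induction k generalizing s with
  | zero => exact hs
  | succ k ih =>
    rw [← add_assoc, pow_succ'] at hs
    exact ih (apply_eq_of_transitionOp_eq hμ hμ1 (transitionOp_pow_le hμ hμ1 hf _) hs ha)

theorem exists_norm_apply_eq_norm {ι E : Type*} [Fintype ι] [Nonempty ι]
    [SeminormedAddCommGroup E] (f : ι → E) : ∃ i, ‖f i‖ = ‖f‖ := by
  obtain ⟨i, hi⟩ := Finite.exists_max fun i => ‖f i‖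
  exact ⟨i, (norm_le_pi_norm f i).antisymm ((pi_norm_le_iff_of_nonneg (norm_nonneg _)).2 hi)⟩

variable [Fintype S]

theorem norm_transitionOp_le (hμ : ∀ a, 0 ≤ μ a) (hμ1 : ∑ a, μ a = 1) (f : S → ℝ) :
    ‖transitionOp μ δ f‖ ≤ ‖f‖ := by
  refine (pi_norm_le_iff_of_nonneg (norm_nonneg f)).2 fun s => abs_le'.2 ⟨?_, ?_⟩
  · exact transitionOp_le hμ hμ1 (fun s => (le_abs_self _).trans (norm_le_pi_norm f s)) s
  · rw [← Pi.neg_apply, ← map_neg]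
    exact transitionOp_le hμ hμ1 (fun s => (neg_le_abs _).trans (norm_le_pi_norm f s)) s

theorem norm_transitionOp_pow_le (hμ : ∀ a, 0 ≤ μ a) (hμ1 : ∑ a, μ a = 1) (n : ℕ) (f : S → ℝ) :
    ‖(transitionOp μ δ ^ n) f‖ ≤ ‖f‖ := by
  induction n with
  | zero => rfl
  | succ n ih => rw [pow_succ']; exact (norm_transitionOp_le hμ hμ1 _).trans ih

/-- Following the letter `a` from `s` leads to a state at which every increment
`Pᵐ⁺¹ f - Pᵐ f` with `m < k` takes its maximal value `M`, and these increments telescope. -/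
theorem nat_mul_le_two_mul_norm_of_transitionOp_pow_eq (hμ : ∀ a, 0 ≤ μ a)
    (hμ1 : ∑ a, μ a = 1) {a : A} (ha : 0 < μ a) {N : ℕ}
    (hN : ∀ n ≥ N, (δ · a)^[n] = (δ · a)^[N]) {f : S → ℝ} {M : ℝ}
    (hM : ∀ s, (transitionOp μ δ f - f) s ≤ M) {k : ℕ} {s : S}
    (hs : (transitionOp μ δ ^ (k + N)) (transitionOp μ δ f - f) s = M) : k * M ≤ 2 * ‖f‖ := by
  set P := transitionOp μ δ
  let t := (δ · a)^[N] s
  have increment_eq (m : ℕ) (hm : m ∈ Finset.range k) :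
      (P ^ (m + 1)) f t - (P ^ m) f t = M := by
    have hmk := Finset.mem_range.1 hm
    rw [← transitionOp_pow_apply_iterate_eq hμ hμ1 hM (m := m) (k := k + N - m) (s := s)
      (by rwa [show m + (k + N - m) = k + N by omega]) ha, hN _ (by omega), map_sub,
      Pi.sub_apply, pow_succ]
    rfl
  calc k * M = ∑ m ∈ Finset.range k, ((P ^ (m + 1)) f t - (P ^ m) f t) := by
        rw [Finset.sum_congr rfl increment_eq, Finset.sum_const, Finset.card_range, nsmul_eq_mul]
    _ = (P ^ k) f t - f t := Finset.sum_range_sub (fun m => (P ^ m) f t) k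
    _ ≤ ‖(P ^ k) f t‖ + ‖f t‖ := (Real.le_norm_self _).trans (norm_sub_le _ _)
    _ ≤ ‖(P ^ k) f‖ + ‖f‖ := by gcongr <;> exact norm_le_pi_norm _ t
    _ ≤ 2 * ‖f‖ := by linarith [norm_transitionOp_pow_le hμ hμ1 (δ := δ) k f]

theorem transitionOp_eq_self_of_norm_pow_sub (hμ : ∀ a, 0 ≤ μ a) (hμ1 : ∑ a, μ a = 1)
    {a : A} (ha : 0 < μ a) {N : ℕ} (hN : ∀ n ≥ N, (δ · a)^[n] = (δ · a)^[N]) {f : S → ℝ}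
    (hf : ∀ j, ‖(transitionOp μ δ ^ j) (transitionOp μ δ f - f)‖ = ‖transitionOp μ δ f - f‖) :
    transitionOp μ δ f = f := by
  rcases isEmpty_or_nonempty S with _ | _
  · exact Subsingleton.elim _ _
  set d := transitionOp μ δ f - f with hd
  have hbound (k : ℕ) : k * ‖d‖ ≤ 2 * ‖f‖ := by
    obtain ⟨s, hs⟩ := exists_norm_apply_eq_norm ((transitionOp μ δ ^ (k + N)) d)
    rw [hf, Real.norm_eq_abs] at hs
    rcases abs_choice ((transitionOp μ δ ^ (k + N)) d s) with hpos | hneg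
    · exact nat_mul_le_two_mul_norm_of_transitionOp_pow_eq hμ hμ1 ha hN
        (fun s => (le_abs_self _).trans (norm_le_pi_norm d s)) (hpos.symm.trans hs)
    · have hd' : transitionOp μ δ (-f) - -f = -d := by rw [map_neg, hd]; abel
      rw [← norm_neg f]
      refine nat_mul_le_two_mul_norm_of_transitionOp_pow_eq hμ hμ1 ha hN (s := s) (fun s => ?_) ?_
      · rw [hd']; exact (neg_le_abs _).trans (norm_le_pi_norm d s)
      · rw [hd', map_neg]; exact hneg.symm.trans hs
  by_contra hne
  obtain ⟨k, hk⟩ := exists_nat_gt (2 * ‖f‖ / ‖d‖)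
  rw [div_lt_iff₀ (norm_pos_iff.2 (sub_ne_zero.2 hne))] at hk
  exact (hbound k).not_gt hk

theorem exists_tendsto_transitionOp_pow {S : Type*} [Finite S] {δ : S → A → S}
    (hμ : ∀ a, 0 ≤ μ a) (hμ1 : ∑ a, μ a = 1) {a : A} (ha : 0 < μ a) {N : ℕ}
    (hN : ∀ n ≥ N, (δ · a)^[n] = (δ · a)^[N]) (f : S → ℝ) :
    ∃ g, Tendsto (fun n => (transitionOp μ δ ^ n) f) atTop (nhds g) := by
  have := Fintype.ofFinite S
  set P := transitionOp μ δ
  have hT : LipschitzWith 1 P := LipschitzWith.mk_one fun f g => by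
    rw [dist_eq_norm, dist_eq_norm, ← map_sub]
    exact norm_transitionOp_le hμ hμ1 (f - g)
  simp only [Module.End.pow_apply]
  refine exists_tendsto_iterate hT (fun g hg => ?_) (isBounded_iff_forall_norm_le.2 ⟨‖f‖, ?_⟩)
  · refine transitionOp_eq_self_of_norm_pow_sub hμ hμ1 ha hN fun j => ?_
    simpa only [map_sub, Module.End.pow_apply, dist_eq_norm] using hg j
  · rintro _ ⟨n, rfl⟩
    simpa only [Module.End.pow_apply] using norm_transitionOp_pow_le hμ hμ1 n f

end Markov

section Congruence

open FreeMonoid (of)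

variable {B C : Type*}

theorem mul_eq_mul_of_mul_iff {u v x y : FreeMonoid B} {b : B} :
    u * v = x * of b * y ↔
      (∃ y', u = x * of b * y' ∧ y = y' * v) ∨ ∃ x', v = x' * of b * y ∧ x = u * x' := by
  constructor
  · intro h
    rw [mul_assoc] at h
    rcases List.append_eq_append_iff.1 h with ⟨x', hx, hv⟩ | ⟨z, hu, hz⟩
    · exact .inr ⟨.ofList x', hv.trans (mul_assoc (.ofList x') (of b) y).symm, hx⟩
    · rcases List.append_eq_cons_iff.1 hz.symm with ⟨rfl, hv⟩ | ⟨y', rfl, hy⟩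
      · exact .inr ⟨1, hv, by simpa using hu.symm⟩
      · exact .inl ⟨y', hu.trans (mul_assoc x (of b) y').symm, hy⟩
  · rintro (⟨y', rfl, rfl⟩ | ⟨x', rfl, rfl⟩) <;> simp only [mul_assoc]

theorem exists_eq_mul_of_mul {w : FreeMonoid B} {k : ℕ} (hk : k < w.length) :
    ∃ u b v, w = u * of b * v ∧ u.length = k := by
  refine ⟨.ofList (w.toList.take k), w.toList[k], .ofList (w.toList.drop (k + 1)), ?_, ?_⟩
  · rw [mul_assoc]
    exact (List.take_append_drop k w.toList).symm.trans
      (congrArg _ (List.drop_eq_getElem_cons hk))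
  · exact List.length_take_of_le hk.le

/-- A congruence of finite index on words for which the powers of each single letter are eventually
constant. This is weaker than aperiodicity of the quotient monoid, which concerns the powers of all
words. -/
structure IsLetterAperiodic (c : Con (FreeMonoid B)) : Prop where
  finite_quotient : Finite c.Quotient
  exists_pow_rel : ∀ b, ∃ N, ∀ n ≥ N, c (of b ^ n) (of b ^ N)

theorem finite_quotient_of_imp_rel {M α : Type*} [Mul M] [Finite α] {c : Con M} (f : M → α)
    (hf : ∀ u v, f u = f v → c u v) : Finite c.Quotient :=
  Finite.of_injective (fun q : c.Quotient => f (Quotient.out q)) fun q q' h => by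
    rw [← Quotient.out_eq q, ← Quotient.out_eq q']
    exact Quotient.sound (hf _ _ h)

theorem IsLetterAperiodic.top : IsLetterAperiodic (⊤ : Con (FreeMonoid B)) where
  finite_quotient := finite_quotient_of_imp_rel (fun _ => ()) fun _ _ _ => trivial
  exists_pow_rel _ := ⟨0, fun _ _ => trivial⟩

theorem IsLetterAperiodic.inf {c d : Con (FreeMonoid B)} (hc : IsLetterAperiodic c)
    (hd : IsLetterAperiodic d) : IsLetterAperiodic (c ⊓ d) where
  finite_quotient :=
    have := hc.finite_quotient
    have := hd.finite_quotient
    finite_quotient_of_imp_rel (fun w => ((w : c.Quotient), (w : d.Quotient))) fun u v h =>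
      ⟨(Con.eq c).1 congr(($h).1), (Con.eq d).1 congr(($h).2)⟩
  exists_pow_rel b := by
    obtain ⟨N, hN⟩ := hc.exists_pow_rel b
    obtain ⟨K, hK⟩ := hd.exists_pow_rel b
    refine ⟨max N K, fun n hn => ⟨?_, ?_⟩⟩
    · exact c.trans (hN n (by omega)) (c.symm (hN _ (by omega)))
    · exact d.trans (hK n (by omega)) (d.symm (hK _ (by omega)))

theorem IsLetterAperiodic.comap_map {c : Con (FreeMonoid C)} (hc : IsLetterAperiodic c)
    (f : B → C) : IsLetterAperiodic (c.comap (FreeMonoid.map f) (map_mul _)) where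
  finite_quotient :=
    have := hc.finite_quotient
    finite_quotient_of_imp_rel (fun w => (FreeMonoid.map f w : c.Quotient)) fun _ _ h =>
      (Con.eq c).1 h
  exists_pow_rel b := by
    simpa only [Con.comap_rel, map_pow, FreeMonoid.map_of] using hc.exists_pow_rel (f b)

/-- The congruence comparing the lengths of words up to the threshold `D`. -/
def lengthCon (B : Type*) (D : ℕ) : Con (FreeMonoid B) where
  r u v := min D u.length = min D v.length
  iseqv := ⟨fun _ => rfl, Eq.symm, Eq.trans⟩
  mul' h h' := by simp only [FreeMonoid.length_mul] at *; omega

theorem lengthCon_iff {D : ℕ} {u v : FreeMonoid B} :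
    lengthCon B D u v ↔ min D u.length = min D v.length :=
  Iff.rfl

theorem length_of_pow (b : B) (n : ℕ) : (of b ^ n).length = n := by
  induction n with
  | zero => rfl
  | succ n ih => rw [pow_succ, FreeMonoid.length_mul, ih, FreeMonoid.length_of]

theorem isLetterAperiodic_lengthCon (D : ℕ) : IsLetterAperiodic (lengthCon B D) where
  finite_quotient := finite_quotient_of_imp_rel
    (fun w => (⟨min D w.length, by omega⟩ : Fin (D + 1))) fun _ _ h => congrArg Fin.val h
  exists_pow_rel b := ⟨D, fun n hn => by simp only [lengthCon_iff, length_of_pow]; omega⟩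

/-- All ways to cut a word at one of its letters, the two remaining factors being recorded modulo
the congruence `c`. -/
def splits (c : Con (FreeMonoid B)) (w : FreeMonoid B) : Set (c.Quotient × B × c.Quotient) :=
  {x | ∃ (u : FreeMonoid B) (b : B) (v : FreeMonoid B), w = u * of b * v ∧ x = (↑u, b, ↑v)}

theorem splits_mul (c : Con (FreeMonoid B)) (u v : FreeMonoid B) :
    splits c (u * v) = (fun x => (x.1, x.2.1, x.2.2 * (v : c.Quotient))) '' splits c u ∪
      (fun x => ((u : c.Quotient) * x.1, x.2)) '' splits c v := by
  ext t
  simp only [splits, Set.mem_ofPred_eq, Set.mem_union, Set.mem_image, mul_eq_mul_of_mul_iff]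
  constructor
  · rintro ⟨x, b, y, ⟨y', rfl, rfl⟩ | ⟨x', rfl, rfl⟩, rfl⟩
    · exact .inl ⟨_, ⟨x, b, y', rfl, rfl⟩, rfl⟩
    · exact .inr ⟨_, ⟨x', b, y, rfl, rfl⟩, rfl⟩
  · rintro (⟨_, ⟨x, b, y, rfl, rfl⟩, rfl⟩ | ⟨_, ⟨x, b, y, rfl, rfl⟩, rfl⟩)
    · exact ⟨x, b, y * v, .inl ⟨y, rfl, rfl⟩, rfl⟩
    · exact ⟨u * x, b, y, .inr ⟨x, rfl, rfl⟩, rfl⟩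

theorem splits_one (c : Con (FreeMonoid B)) : splits c 1 = ∅ := by
  refine Set.eq_empty_of_forall_notMem ?_
  rintro _ ⟨u, b, v, h, -⟩
  have hlen := congrArg FreeMonoid.length h
  simp only [FreeMonoid.length_one, FreeMonoid.length_mul, FreeMonoid.length_of] at hlen
  omega

theorem splits_of (c : Con (FreeMonoid B)) (b : B) : splits c (of b) = {(1, b, 1)} := by
  ext t
  constructor
  · rintro ⟨u, b', v, h, rfl⟩
    have hlen := congrArg FreeMonoid.length h
    simp only [FreeMonoid.length_mul, FreeMonoid.length_of] at hlen
    obtain rfl := FreeMonoid.length_eq_zero.1 (show u.length = 0 by omega)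
    obtain rfl := FreeMonoid.length_eq_zero.1 (show v.length = 0 by omega)
    rw [one_mul, mul_one] at h
    rw [FreeMonoid.of_injective h]
    rfl
  · rintro rfl
    exact ⟨1, b, 1, by simp, rfl⟩

theorem splits_of_pow (c : Con (FreeMonoid B)) (b : B) (n : ℕ) :
    splits c (of b ^ n) =
      {x | ∃ i j, i + j + 1 = n ∧ x = (((of b ^ i : FreeMonoid B) : c.Quotient), b,
        ((of b ^ j : FreeMonoid B) : c.Quotient))} := by
  induction n with
  | zero => simp [splits_one]
  | succ n ih =>
    rw [pow_succ, splits_mul, ih, splits_of]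
    ext t
    simp only [Set.image_singleton, Set.union_singleton, Set.mem_insert_iff, Set.mem_image,
      Set.mem_ofPred_eq]
    constructor
    · rintro (rfl | ⟨_, ⟨i, j, hij, rfl⟩, rfl⟩)
      · exact ⟨n, 0, rfl, by simp⟩
      · exact ⟨i, j + 1, by omega, by rw [pow_succ]; rfl⟩
    · rintro ⟨i, j, hij, rfl⟩
      cases j with
      | zero => exact .inl (by obtain rfl : i = n := by omega
                               simp)
      | succ j => exact .inr ⟨_, ⟨i, j, by omega, rfl⟩, by rw [pow_succ _ j]; rfl⟩

theorem splits_of_pow_subset {c : Con (FreeMonoid B)} {b : B} {N : ℕ}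
    (hN : ∀ n ≥ N, c (of b ^ n) (of b ^ N)) {n n' : ℕ} (hn : 2 * N + 1 ≤ n)
    (hn' : 2 * N + 1 ≤ n') : splits c (of b ^ n) ⊆ splits c (of b ^ n') := by
  have hpow {i j : ℕ} (hi : N ≤ i) (hj : N ≤ j) :
      ((of b ^ i : FreeMonoid B) : c.Quotient) = ((of b ^ j : FreeMonoid B) : c.Quotient) :=
    (Con.eq c).2 (c.trans (hN i hi) (c.symm (hN j hj)))
  simp only [splits_of_pow]
  rintro _ ⟨i, j, hij, rfl⟩
  rcases lt_or_ge i N with hi | hi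
  · exact ⟨i, n' - 1 - i, by omega, by rw [hpow (i := j) (j := n' - 1 - i) (by omega) (by omega)]⟩
  rcases lt_or_ge j N with hj | hj
  · exact ⟨n' - 1 - j, j, by omega, by rw [hpow (j := n' - 1 - j) hi (by omega)]⟩
  · exact ⟨N, n' - 1 - N, by omega, by rw [hpow hi le_rfl, hpow (j := n' - 1 - N) hj (by omega)]⟩

/-- The refinement of `c` that also compares the ways to cut a word at one letter. Adding a
quantifier to a formula amounts to passing from `c` to `pointed c`. -/
def pointed (c : Con (FreeMonoid B)) : Con (FreeMonoid B) where
  r u v := c u v ∧ splits c u = splits c v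
  iseqv := ⟨fun u => ⟨c.refl u, rfl⟩, fun h => ⟨c.symm h.1, h.2.symm⟩,
    fun h h' => ⟨c.trans h.1 h'.1, h.2.trans h'.2⟩⟩
  mul' h h' := ⟨c.mul h.1 h'.1, by
    rw [splits_mul, splits_mul, h.2, h'.2, (Con.eq c).2 h.1, (Con.eq c).2 h'.1]⟩

theorem exists_split_of_pointed {c : Con (FreeMonoid B)} {w u v : FreeMonoid B} {b : B}
    (h : pointed c (u * of b * v) w) : ∃ u' v', w = u' * of b * v' ∧ c u u' ∧ c v v' := by
  have hmem : (↑u, b, ↑v) ∈ splits c w := h.2 ▸ ⟨u, b, v, rfl, rfl⟩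
  obtain ⟨u', b', v', hw, heq⟩ := hmem
  simp only [Prod.mk.injEq, Con.eq] at heq
  obtain ⟨hu, rfl, hv⟩ := heq
  exact ⟨u', v', hw, hu, hv⟩

theorem IsLetterAperiodic.pointed [Finite B] {c : Con (FreeMonoid B)}
    (hc : IsLetterAperiodic c) : IsLetterAperiodic (pointed c) where
  finite_quotient :=
    have := hc.finite_quotient
    finite_quotient_of_imp_rel (fun w => ((w : c.Quotient), splits c w)) fun u v h =>
      ⟨(Con.eq c).1 congr(($h).1), congr(($h).2)⟩
  exists_pow_rel b := by
    obtain ⟨N, hN⟩ := hc.exists_pow_rel b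
    refine ⟨2 * N + 1, fun n hn => ⟨?_, ?_⟩⟩
    · exact c.trans (hN n (by omega)) (c.symm (hN _ (by omega)))
    · exact (splits_of_pow_subset hN hn le_rfl).antisymm (splits_of_pow_subset hN le_rfl hn)

end Congruence

section Recognizable

open FreeMonoid (of)

variable {A : Type*} {n r : ℕ}

/-- The letter at position `p` of the word `w`, together with the set of those variables whose value
under the assignment `x` is `p`. -/
def markedLetter (w : Fin n → A) (x : Fin r → Fin n) (p : Fin n) : A × (Fin r → Prop) :=
  (w p, fun i => x i = p)

/-- The word `w` carrying the assignment `x` of `r` variables to positions as extra marks on its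
letters. -/
def markedWord (w : Fin n → A) (x : Fin r → Fin n) : FreeMonoid (A × (Fin r → Prop)) :=
  .ofList (List.ofFn (markedLetter w x))

/-- Extends a marked letter by the mark `m` of one further variable. -/
def addMark (m : Prop) (b : A × (Fin r → Prop)) : A × (Fin (r + 1) → Prop) :=
  (b.1, Fin.snoc b.2 m)

theorem length_markedWord (w : Fin n → A) (x : Fin r → Fin n) : (markedWord w x).length = n :=
  List.length_ofFn

theorem getElem_toList_markedWord (w : Fin n → A) (x : Fin r → Fin n) (p : ℕ)
    (hp : p < (markedWord w x).toList.length) :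
    (markedWord w x).toList[p] = markedLetter w x ⟨p, (length_markedWord w x).le.trans_lt' hp⟩ :=
  List.getElem_ofFn hp

theorem markedLetter_snoc (w : Fin n → A) (x : Fin r → Fin n) (y p : Fin n) :
    markedLetter w (Fin.snoc x y : Fin (r + 1) → Fin n) p =
      addMark (y = p) (markedLetter w x p) := by
  refine Prod.ext rfl (funext fun i => ?_)
  cases i using Fin.lastCases <;> simp [markedLetter, addMark]

theorem exists_eq_markedLetter {w : Fin n → A} {x : Fin r → Fin n}
    {u v : FreeMonoid (A × (Fin r → Prop))} {b : A × (Fin r → Prop)}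
    (h : markedWord w x = u * of b * v) :
    ∃ p : Fin n, p.val = u.length ∧ b = markedLetter w x p := by
  have hlen := congrArg FreeMonoid.length h
  simp only [length_markedWord, FreeMonoid.length_mul, FreeMonoid.length_of] at hlen
  refine ⟨⟨u.length, by omega⟩, rfl, ?_⟩
  have hget := getElem_toList_markedWord w x u.length
    (lt_of_lt_of_eq (by omega) (length_markedWord w x).symm)
  simpa [h, FreeMonoid.length] using hget

theorem exists_markedWord_eq (w : Fin n → A) (x : Fin r → Fin n) (p : Fin n) :
    ∃ u v, markedWord w x = u * of (markedLetter w x p) * v ∧ u.length = p.val := by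
  obtain ⟨u, b, v, h, hu⟩ :=
    exists_eq_mul_of_mul (p.isLt.trans_eq (length_markedWord w x).symm)
  obtain ⟨p', hp', rfl⟩ := exists_eq_markedLetter h
  obtain rfl : p' = p := Fin.ext (hp'.trans hu)
  exact ⟨u, v, h, hu⟩

theorem eq_of_markedWord_eq {n' : ℕ} {w : Fin n → A} {w' : Fin n' → A} {x : Fin r → Fin n}
    {x' : Fin r → Fin n'} {u v : FreeMonoid (A × (Fin r → Prop))} {i : Fin r}
    (h : markedWord w' x' = u * of (markedLetter w x (x i)) * v) :
    (x' i).val = u.length ∧ w' (x' i) = w (x i) := by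
  obtain ⟨p, hp, heq⟩ := exists_eq_markedLetter h
  obtain rfl : x' i = p := congr(($heq).2 i).mp rfl
  exact ⟨hp, congr(($heq).1).symm⟩

theorem markedWord_snoc {w : Fin n → A} {x : Fin r → Fin n} {y : Fin n}
    {u v : FreeMonoid (A × (Fin r → Prop))} {b : A × (Fin r → Prop)}
    (h : markedWord w x = u * of b * v) (hy : y.val = u.length) :
    markedWord w (Fin.snoc x y : Fin (r + 1) → Fin n) =
      FreeMonoid.map (addMark False) u * of (addMark True b) *
        FreeMonoid.map (addMark False) v := by
  refine FreeMonoid.toList.injective (List.ext_getElem ?_ fun p hp _ => ?_)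
  · have hlen := congrArg FreeMonoid.length h
    simp only [length_markedWord, FreeMonoid.length_mul, FreeMonoid.length_of] at hlen
    simpa [FreeMonoid.length, add_assoc, add_comm 1] using
      (length_markedWord w (Fin.snoc x y)).trans hlen
  have hpn : p < n := lt_of_lt_of_eq hp (length_markedWord w _)
  have hmark : (y = ⟨p, hpn⟩) = (u.toList.length = p) :=
    propext (Fin.ext_iff.trans (Eq.congr_left hy))
  rw [getElem_toList_markedWord, markedLetter_snoc, hmark,
    ← getElem_toList_markedWord w x p (lt_of_lt_of_eq hpn (length_markedWord w x).symm)]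
  simp only [h, FreeMonoid.toList_mul, FreeMonoid.toList_of, FreeMonoid.toList_map]
  rcases lt_trichotomy p u.toList.length with hlt | rfl | hgt
  · simp [List.getElem_append_left, hlt, hlt.ne']
  · simp
  · obtain ⟨q, rfl⟩ := Nat.exists_eq_add_of_lt hgt
    simp [List.getElem_append_right, Nat.add_assoc]

/-- A relation between the positions of a word that is determined by the class of the marked word
modulo a congruence of the kind `IsLetterAperiodic`. -/
def IsRecognizable (R : ∀ n, (Fin n → A) → (Fin r → Fin n) → Prop) : Prop :=
  ∃ c, IsLetterAperiodic c ∧ ∀ n n' w w' x x',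
    c (markedWord w x) (markedWord w' x') → R n w x → R n' w' x'

namespace IsRecognizable

variable {R R' : ∀ n, (Fin n → A) → (Fin r → Fin n) → Prop}

theorem false : IsRecognizable fun n (_ : Fin n → A) (_ : Fin r → Fin n) => False :=
  ⟨⊤, .top, fun _ _ _ _ _ _ _ => id⟩

theorem imp (h : IsRecognizable R) (h' : IsRecognizable R') :
    IsRecognizable fun n w x => R n w x → R' n w x := by
  obtain ⟨c, hc, hR⟩ := h
  obtain ⟨c', hc', hR'⟩ := h'
  exact ⟨c ⊓ c', hc.inf hc', fun n n' w w' x x' h himp hx' =>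
    hR' _ _ _ _ _ _ h.2 (himp (hR _ _ _ _ _ _ (c.symm h.1) hx'))⟩

theorem not (h : IsRecognizable R) : IsRecognizable fun n w x => ¬R n w x :=
  h.imp false

theorem or (h : IsRecognizable R) (h' : IsRecognizable R') :
    IsRecognizable fun n w x => R n w x ∨ R' n w x := by
  simpa only [or_iff_not_imp_left] using h.not.imp h'

theorem exists_snoc [Finite A] {R : ∀ n, (Fin n → A) → (Fin (r + 1) → Fin n) → Prop}
    (h : IsRecognizable R) : IsRecognizable fun n w (x : Fin r → Fin n) =>
      ∃ y, R n w (Fin.snoc x y : Fin (r + 1) → Fin n) := by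
  obtain ⟨c, hc, hR⟩ := h
  refine ⟨_, (hc.comap_map (addMark False)).pointed, ?_⟩
  rintro n n' w w' x x' hww' ⟨y, hy⟩
  obtain ⟨u, v, hw, hu⟩ := exists_markedWord_eq w x y
  rw [hw] at hww'
  obtain ⟨u', v', hw', huu', hvv'⟩ := exists_split_of_pointed hww'
  obtain ⟨y', hy', -⟩ := exists_eq_markedLetter hw'
  refine ⟨y', hR _ _ _ _ _ _ ?_ hy⟩
  rw [markedWord_snoc hw hu.symm, markedWord_snoc hw' hy']
  exact c.mul (c.mul huu' (c.refl _)) hvv'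

theorem forall_snoc [Finite A] {R : ∀ n, (Fin n → A) → (Fin (r + 1) → Fin n) → Prop}
    (h : IsRecognizable R) : IsRecognizable fun n w (x : Fin r → Fin n) =>
      ∀ y, R n w (Fin.snoc x y : Fin (r + 1) → Fin n) := by
  simpa only [not_exists, not_not] using h.not.exists_snoc.not

/-- Cut the marked word at `x j`, and its left factor at `x i`: the length of the middle factor is
`x j - x i - 1`. -/
theorem lt_and [Finite A] (i j : Fin r) (D : ℕ) (P : ℕ → A → Prop) :
    IsRecognizable fun n (w : Fin n → A) x =>
      x i < x j ∧ P (min D (x j - x i - 1)) (w (x j)) := by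
  refine ⟨_, (isLetterAperiodic_lengthCon D).pointed.pointed, ?_⟩
  rintro n n' w w' x x' hww' ⟨hlt, hP⟩
  obtain ⟨u, v, hw, hu⟩ := exists_markedWord_eq w x (x j)
  obtain ⟨u₁, b, u₂, rfl, hu₁⟩ := exists_eq_mul_of_mul ((Fin.lt_def.1 hlt).trans_eq hu.symm)
  obtain rfl : b = markedLetter w x (x i) := by
    obtain ⟨p, hp, rfl⟩ := exists_eq_markedLetter (by simpa only [mul_assoc] using hw)
    rw [Fin.ext (hp.trans hu₁)]
  rw [hw] at hww'
  obtain ⟨u', v', hw', hu', -⟩ := exists_split_of_pointed hww'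
  obtain ⟨u₁', u₂', rfl, -, hu₂⟩ := exists_split_of_pointed hu'
  obtain ⟨hj, hletter⟩ := eq_of_markedWord_eq hw'
  obtain ⟨hi, -⟩ := eq_of_markedWord_eq (u := u₁') (by simpa only [mul_assoc] using hw')
  simp only [FreeMonoid.length_mul, FreeMonoid.length_of] at hu hj
  rw [lengthCon_iff] at hu₂
  refine ⟨Fin.lt_def.2 (by omega), ?_⟩
  rw [hletter]
  convert hP using 1
  omega

theorem lt [Finite A] (i j : Fin r) : IsRecognizable fun n (_ : Fin n → A) x => x i < x j := by
  simpa only [and_true] using lt_and (A := A) i j 0 fun _ _ => True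

theorem le [Finite A] (i j : Fin r) : IsRecognizable fun n (_ : Fin n → A) x => x i ≤ x j := by
  simpa only [not_lt] using (lt (A := A) j i).not

theorem eq [Finite A] (i j : Fin r) : IsRecognizable fun n (_ : Fin n → A) x => x i = x j := by
  simpa only [not_or, not_lt, ge_antisymm_iff] using ((lt (A := A) i j).or (lt j i)).not

end IsRecognizable

end Recognizable

section Formulas

variable {n r D : ℕ}

/-- In a word over the alphabet `Fin D → Bool`, bit `d` of the letter at position `b` tells whether
`b` is joined to the position `d + 1` places before it; `HasBackEdge w a b` says that `a` is one of
these neighbours of `b`. -/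
def HasBackEdge (w : Fin n → Fin D → Bool) (a b : Fin n) : Prop :=
  ∃ d : Fin D, a.val + d + 1 = b ∧ w b d = true

/-- The ordered graph on `Fin n` coded by the word `w`, as an `L≤`-structure. -/
abbrev wordStructure (w : Fin n → Fin D → Bool) : Lle.Structure (Fin n) where
  funMap := fun f _ => Empty.elim f
  RelMap
    | .adj => fun x => HasBackEdge w (x 0) (x 1) ∨ HasBackEdge w (x 1) (x 0)
    | .le => fun x => x 0 ≤ x 1

theorem isRecognizable_hasBackEdge (i j : Fin r) :
    IsRecognizable fun n (w : Fin n → Fin D → Bool) x => HasBackEdge w (x i) (x j) := by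
  convert IsRecognizable.lt_and i j D fun k (a : Fin D → Bool) =>
    ∃ d : Fin D, d.val = k ∧ a d = true using 4 with n w x
  constructor
  · rintro ⟨d, hd, hw⟩
    exact ⟨Fin.lt_def.2 (by omega), d, by omega, hw⟩
  · rintro ⟨hlt, d, hd, hw⟩
    exact ⟨d, by have := Fin.lt_def.1 hlt; omega, hw⟩

theorem exists_eq_var (t : Lle.Term (Empty ⊕ Fin r)) : ∃ i, t = .var (.inr i) := by
  match t with
  | .var (.inr i) => exact ⟨i, rfl⟩
  | .var (.inl e) => exact e.elim
  | .func f _ => exact Empty.elim f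

theorem isRecognizable_realize (φ : Lle.BoundedFormula Empty r) :
    IsRecognizable fun n (w : Fin n → Fin D → Bool) x =>
      @Language.BoundedFormula.Realize Lle (Fin n) (wordStructure w) Empty r φ default x := by
  induction φ with
  | falsum => exact .false
  | equal t₁ t₂ =>
    obtain ⟨i, rfl⟩ := exists_eq_var t₁
    obtain ⟨j, rfl⟩ := exists_eq_var t₂
    exact .eq i j
  | rel R ts =>
    choose i hi using fun k => exists_eq_var (ts k)
    obtain rfl : ts = fun k => .var (.inr (i k)) := funext hi
    cases R with
    | adj => exact (isRecognizable_hasBackEdge _ _).or (isRecognizable_hasBackEdge _ _)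
    | le => exact .le (i 0) (i 1)
  | imp _ _ ih₁ ih₂ => exact ih₁.imp ih₂
  | all _ ih => exact ih.forall_snoc

end Formulas

section BackEdges

variable {n D : ℕ}

/-- The word coding the edges of length at most `D` of the graph `ω`: bit `d` of the letter at `v`
tells whether `v - (d + 1)` is a vertex joined to `v`. -/
def backEdges (D : ℕ) (ω : Sample n) (v : Fin n) (d : Fin D) : Bool :=
  if h : d + 1 ≤ v.val then
    ω ⟨(⟨v - (d + 1), by omega⟩, v), Fin.lt_def.2 (Nat.sub_lt_self d.val.succ_pos h)⟩
  else false

theorem hasBackEdge_backEdges {ω : Sample n} {a b : Fin n} :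
    HasBackEdge (backEdges D ω) a b ↔
      ∃ h : a < b, b.val - a ≤ D ∧ ω ⟨(a, b), h⟩ = true := by
  constructor
  · rintro ⟨d, hd, hω⟩
    have ha : (⟨b - (d + 1), by omega⟩ : Fin n) = a := Fin.ext (by simp only; omega)
    simp only [backEdges, show d.val + 1 ≤ b by omega, dite_true, ha] at hω
    exact ⟨Fin.lt_def.2 (by omega), by omega, hω⟩
  · rintro ⟨h, hD, hω⟩
    have := Fin.lt_def.1 h
    have ha : (⟨b - (b - a - 1 + 1), by omega⟩ : Fin n) = a := Fin.ext (by simp only; omega)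
    refine ⟨⟨b - a - 1, by omega⟩, by simp only; omega, ?_⟩
    simpa only [backEdges, show b.val - a - 1 + 1 ≤ b by omega, dite_true, ha] using hω

theorem sampleAdj_iff {ω : Sample n} {a b : Fin n} :
    sampleAdj ω a b ↔
      (∃ h : a < b, ω ⟨(a, b), h⟩ = true) ∨ ∃ h : b < a, ω ⟨(b, a), h⟩ = true := by
  constructor
  · rintro ⟨⟨⟨v, w⟩, h⟩, hω, ⟨hv, hw⟩ | ⟨hv, hw⟩⟩ <;>
      obtain rfl := Fin.ext hv <;> obtain rfl := Fin.ext hw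
    exacts [.inl ⟨h, hω⟩, .inr ⟨h, hω⟩]
  · rintro (⟨h, hω⟩ | ⟨h, hω⟩)
    exacts [⟨_, hω, .inl ⟨rfl, rfl⟩⟩, ⟨_, hω, .inr ⟨rfl, rfl⟩⟩]

theorem leStructure_eq_wordStructure {ω : Sample n}
    (hω : ∀ e, ω e = true → e.1.2.val - e.1.1 ≤ D) :
    leStructure ω = wordStructure (backEdges D ω) := by
  have hedge (a b : Fin n) :
      (∃ h : a < b, ω ⟨(a, b), h⟩ = true) ↔ HasBackEdge (backEdges D ω) a b := by
    rw [hasBackEdge_backEdges]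
    exact exists_congr fun h => ⟨fun he => ⟨hω _ he, he⟩, And.right⟩
  refine Language.Structure.ext rfl ?_
  ext k R x
  cases R with
  | adj => exact sampleAdj_iff.trans (or_congr (hedge _ _) (hedge _ _))
  | le => rfl

theorem sampleWeight_eq_zero {p : ℕ → ℝ} {ω : Sample n} {e : EdgeIdx n} (he : ω e = true)
    (hp : p (e.1.2.val - e.1.1) = 0) : sampleWeight p ω = 0 :=
  Finset.prod_eq_zero (Finset.mem_univ e) (by rw [if_pos he, hp])

theorem Pr_congr {p : ℕ → ℝ} {P Q : Sample n → Prop}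
    (h : ∀ ω, sampleWeight p ω ≠ 0 → (P ω ↔ Q ω)) : Pr p n P = Pr p n Q := by
  refine Finset.sum_congr rfl fun ω _ => ?_
  by_cases hω : sampleWeight p ω = 0
  · simp only [hω, ite_self]
  · classical exact if_congr (h ω hω) rfl rfl

theorem probLe_eq_Pr_wordStructure {p : ℕ → ℝ} (hp : ∀ i > D, p i = 0) (n : ℕ) (ψ : Lle.Sentence) :
    ProbLe p n ψ = Pr p n fun ω =>
      @Language.Sentence.Realize Lle (Fin n) (wordStructure (backEdges D ω)) ψ := by
  refine Pr_congr fun ω hω => ?_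
  rw [SatLe, leStructure_eq_wordStructure (D := D) fun e he => ?_]
  exact not_lt.1 fun hD => hω (sampleWeight_eq_zero he (hp _ hD))

end BackEdges

section Bernoulli

variable {ι κ κ' : Type*} [Fintype ι] [Fintype κ] [Fintype κ'] {q : ι → ℝ}

/-- The probability of the outcome `b` of independent coin tosses with success probabilities
`q`. -/
def bernoulliWeight (q : ι → ℝ) (b : ι → Bool) : ℝ :=
  ∏ i, if b i then q i else 1 - q i

theorem bernoulliWeight_nonneg (hq : ∀ i, 0 ≤ q i ∧ q i ≤ 1) (b : ι → Bool) :
    0 ≤ bernoulliWeight q b :=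
  Finset.prod_nonneg fun i _ => by split_ifs; exacts [(hq i).1, sub_nonneg.2 (hq i).2]

variable [DecidableEq ι] [DecidableEq κ] [DecidableEq κ']

theorem sum_bernoulliWeight (q : ι → ℝ) : ∑ b, bernoulliWeight q b = 1 :=
  calc ∑ b, bernoulliWeight q b = ∏ i, ∑ t : Bool, if t then q i else 1 - q i := by
        rw [Finset.prod_univ_sum, Fintype.piFinset_univ]; rfl
    _ = 1 := by simp

/-- The expectation of `F` under independent coin tosses with success probabilities `q`. -/
def bernoulliMean (q : ι → ℝ) (F : (ι → Bool) → ℝ) : ℝ :=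
  ∑ b, bernoulliWeight q b * F b

theorem bernoulliMean_const (q : ι → ℝ) (C : ℝ) : bernoulliMean q (fun _ => C) = C := by
  rw [bernoulliMean, ← Finset.sum_mul, sum_bernoulliWeight, one_mul]

theorem tendsto_bernoulliMean {α : Type*} {l : Filter α} (q : ι → ℝ) {F : α → (ι → Bool) → ℝ}
    {G : (ι → Bool) → ℝ} (h : ∀ b, Tendsto (F · b) l (nhds (G b))) :
    Tendsto (fun t => bernoulliMean q (F t)) l (nhds (bernoulliMean q G)) :=
  tendsto_finsetSum _ fun b _ => (h b).const_mul _

theorem bernoulliMean_equiv (e : κ ≃ ι) (F : (κ → Bool) → ℝ) :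
    bernoulliMean q (fun b => F (b ∘ e)) = bernoulliMean (q ∘ e) F :=
  Fintype.sum_equiv (e.arrowCongr (.refl Bool)).symm _ _ fun b =>
    congrArg (· * F (b ∘ e)) (Fintype.prod_equiv e _ _ fun _ => rfl).symm

theorem bernoulliMean_sum {q : κ ⊕ κ' → ℝ} (F : (κ → Bool) → (κ' → Bool) → ℝ) :
    bernoulliMean q (fun b => F (b ∘ .inl) (b ∘ .inr)) =
      bernoulliMean (q ∘ .inl) fun b => bernoulliMean (q ∘ .inr) (F b) := by
  simp only [bernoulliMean, Finset.mul_sum, ← mul_assoc]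
  rw [← Fintype.sum_prod_type']
  refine Fintype.sum_equiv (Equiv.sumArrowEquivProdArrow κ κ' Bool) _ _ fun b => ?_
  simp only [bernoulliWeight, Fintype.prod_sum_type]
  rfl

theorem bernoulliMean_comp {i : κ → ι} (hi : Function.Injective i) (F : (κ → Bool) → ℝ) :
    bernoulliMean q (fun b => F (b ∘ i)) = bernoulliMean (q ∘ i) F := by
  classical
  let e : κ ⊕ ↥(Set.range i)ᶜ ≃ ι :=
    ((Equiv.ofInjective i hi).sumCongr (.refl _)).trans (Equiv.Set.sumCompl (Set.range i))
  calc bernoulliMean q (fun b => F (b ∘ i))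
      = bernoulliMean (q ∘ e) (fun b => F (b ∘ .inl)) :=
        bernoulliMean_equiv e fun b => F (b ∘ .inl)
    _ = bernoulliMean (q ∘ i) F := by
      rw [bernoulliMean_sum fun b _ => F b]
      simp only [bernoulliMean_const]
      rfl

theorem bernoulliMean_comp_comp {i : κ → ι} {j : κ' → ι} (h : Function.Injective (Sum.elim i j))
    (F : (κ → Bool) → (κ' → Bool) → ℝ) :
    bernoulliMean q (fun b => F (b ∘ i) (b ∘ j)) =
      bernoulliMean (q ∘ i) fun b => bernoulliMean (q ∘ j) (F b) :=
  (bernoulliMean_comp h fun b => F (b ∘ .inl) (b ∘ .inr)).trans (bernoulliMean_sum F)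

end Bernoulli

section Growth

variable {D n : ℕ}

/-- The success probabilities of the potential edges in `G(n, p̄)`. -/
def edgeProb (p : ℕ → ℝ) (e : EdgeIdx n) : ℝ :=
  p (e.1.2.val - e.1.1.val)

/-- The inclusion of the potential edges on `n` vertices into those on `n + 1` vertices. -/
def castSuccEdge (e : EdgeIdx n) : EdgeIdx (n + 1) :=
  ⟨(e.1.1.castSucc, e.1.2.castSucc), e.2⟩

/-- The potential edge of length `d + 1` that ends in the last of `n + 1` vertices. -/
def lastEdge (hD : D ≤ n) (d : Fin D) : EdgeIdx (n + 1) :=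
  ⟨(⟨n - (d + 1), by omega⟩, Fin.last n), Fin.lt_def.2 (by simp only [Fin.val_last]; omega)⟩

theorem injective_elim_castSuccEdge_lastEdge (hD : D ≤ n) :
    Function.Injective (Sum.elim (castSuccEdge (n := n)) (lastEdge hD)) := by
  refine Function.Injective.sumElim (fun e e' h => ?_) (fun d d' h => ?_) fun e d h => ?_
  · simp only [castSuccEdge, Subtype.mk.injEq, Prod.mk.injEq, Fin.castSucc_inj] at h
    exact Subtype.ext (Prod.ext h.1 h.2)
  · have := congrArg (fun e : EdgeIdx (n + 1) => e.1.1.val) h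
    simp only [lastEdge] at this
    omega
  · exact (Fin.castSucc_lt_last _).ne congr(($h).1.2)

theorem backEdges_succ (hD : D ≤ n) (ω : Sample (n + 1)) :
    backEdges D ω =
      Fin.snoc (α := fun _ => Fin D → Bool) (backEdges D (ω ∘ castSuccEdge)) (ω ∘ lastEdge hD) := by
  funext v d
  cases v using Fin.lastCases with
  | last =>
    rw [Fin.snoc_last]
    exact dif_pos (show d.val + 1 ≤ n by omega)
  | cast v => rw [Fin.snoc_castSucc]; rfl

theorem bernoulliMean_backEdges_succ (p : ℕ → ℝ) (hD : D ≤ n)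
    (F : (Fin (n + 1) → Fin D → Bool) → ℝ) :
    bernoulliMean (edgeProb p) (fun ω : Sample (n + 1) => F (backEdges D ω)) =
      bernoulliMean (edgeProb p) fun ω : Sample n =>
        bernoulliMean (fun d : Fin D => p (d + 1)) fun a => F (Fin.snoc (backEdges D ω) a) := by
  have hlast : edgeProb p ∘ lastEdge hD = fun d : Fin D => p (d + 1) :=
    funext fun d => congrArg p (by simp only [lastEdge, Fin.val_last]; omega)
  simp only [backEdges_succ hD]
  rw [bernoulliMean_comp_comp (injective_elim_castSuccEdge_lastEdge hD) fun ω a =>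
    F (Fin.snoc (backEdges D ω) a), hlast]
  rfl

open scoped Classical in
theorem Pr_eq_bernoulliMean (p : ℕ → ℝ) (P : Sample n → Prop) :
    Pr p n P = bernoulliMean (edgeProb p) fun ω => if P ω then 1 else 0 := by
  simp only [Pr, bernoulliMean, mul_ite, mul_one, mul_zero]
  rfl

end Growth

section Convergence

open FreeMonoid (of)

variable {A : Type*} {D n : ℕ}

/-- The class modulo `c` of a word without marks. -/
def wordClass (c : Con (FreeMonoid (A × (Fin 0 → Prop)))) (w : Fin n → A) : c.Quotient :=
  (markedWord w (default : Fin 0 → Fin n) : c.Quotient)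

/-- The automaton reading words from left to right: its state is the class of the word read so
far. -/
def appendLetter (c : Con (FreeMonoid (A × (Fin 0 → Prop)))) (s : c.Quotient) (a : A) :
    c.Quotient :=
  s * (of (a, default) : FreeMonoid (A × (Fin 0 → Prop)))

theorem wordClass_snoc (c : Con (FreeMonoid (A × (Fin 0 → Prop)))) (w : Fin n → A) (a : A) :
    wordClass c (Fin.snoc w a : Fin (n + 1) → A) = appendLetter c (wordClass c w) a := by
  have hcast (x : Fin 0 → Fin (n + 1)) (p : Fin n) :
      markedLetter (Fin.snoc w a : Fin (n + 1) → A) x p.castSucc = markedLetter w default p :=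
    Prod.ext (Fin.snoc_castSucc (α := fun _ => A) a w p) (Subsingleton.elim _ _)
  have hlast (x : Fin 0 → Fin (n + 1)) :
      markedLetter (Fin.snoc w a : Fin (n + 1) → A) x (Fin.last n) = (a, default) :=
    Prod.ext (Fin.snoc_last (α := fun _ => A) a w) (Subsingleton.elim _ _)
  refine congrArg c.mk' (FreeMonoid.toList.injective ((List.ofFn_succ' _).trans ?_))
  rw [List.concat_eq_append]
  exact congrArg₂ (· ++ [·]) (congrArg List.ofFn (funext (hcast _))) (hlast _)

theorem IsLetterAperiodic.exists_iterate_appendLetter_eq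
    {c : Con (FreeMonoid (A × (Fin 0 → Prop)))} (hc : IsLetterAperiodic c) (a : A) :
    ∃ N, ∀ n ≥ N, (appendLetter c · a)^[n] = (appendLetter c · a)^[N] := by
  obtain ⟨N, hN⟩ := hc.exists_pow_rel (a, default)
  refine ⟨N, fun n hn => ?_⟩
  simp only [appendLetter, mul_right_iterate]
  exact congrArg (fun t s => s * t) ((Con.eq c).2 (hN n hn))

theorem bernoulliMean_wordClass_add (p : ℕ → ℝ)
    (c : Con (FreeMonoid ((Fin D → Bool) × (Fin 0 → Prop)))) (f : c.Quotient → ℝ) (k : ℕ) :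
    bernoulliMean (edgeProb p) (fun ω : Sample (D + k) => f (wordClass c (backEdges D ω))) =
      bernoulliMean (edgeProb p) fun ω : Sample D =>
        (transitionOp (bernoulliWeight fun d : Fin D => p (d + 1)) (appendLetter c) ^ k) f
          (wordClass c (backEdges D ω)) := by
  induction k generalizing f with
  | zero => rfl
  | succ k ih =>
    rw [pow_succ]
    refine (bernoulliMean_backEdges_succ p (D.le_add_right k) (f ∘ wordClass c)).trans
      (Eq.trans ?_ (ih _))
    simp only [Function.comp_apply, wordClass_snoc, transitionOp_apply, bernoulliMean]

theorem exists_tendsto_bernoulliMean_wordClass {p : ℕ → ℝ} (hp : ∀ i, 0 ≤ p i ∧ p i ≤ 1)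
    {c : Con (FreeMonoid ((Fin D → Bool) × (Fin 0 → Prop)))} (hc : IsLetterAperiodic c)
    (f : c.Quotient → ℝ) :
    ∃ ℓ, Tendsto (fun n => bernoulliMean (edgeProb p) fun ω : Sample n =>
      f (wordClass c (backEdges D ω))) atTop (nhds ℓ) := by
  let μ := bernoulliWeight fun d : Fin D => p (d + 1)
  have hμ : ∀ a, 0 ≤ μ a := bernoulliWeight_nonneg fun d => hp (d + 1)
  have hμ1 : ∑ a, μ a = 1 := sum_bernoulliWeight _
  obtain ⟨a, -, ha⟩ : ∃ a ∈ Finset.univ, 0 < μ a :=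
    Finset.exists_lt_of_sum_lt (by simp [hμ1])
  obtain ⟨N, hN⟩ := hc.exists_iterate_appendLetter_eq a
  have := hc.finite_quotient
  obtain ⟨g, hg⟩ := exists_tendsto_transitionOp_pow hμ hμ1 ha hN f
  let M (n : ℕ) : ℝ :=
    bernoulliMean (edgeProb p) fun ω : Sample n => f (wordClass c (backEdges D ω))
  have hM : Tendsto (fun k => M (D + k)) atTop (nhds _) :=
    (tendsto_bernoulliMean (edgeProb p) fun ω : Sample D =>
      tendsto_pi_nhds.1 hg (wordClass c (backEdges D ω))).congr fun k =>
        (bernoulliMean_wordClass_add p c f k).symm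
  exact ⟨_, (tendsto_add_atTop_iff_nat D).1 (by simpa only [add_comm D] using hM)⟩

theorem IsRecognizable.exists_tendsto_Pr {p : ℕ → ℝ} (hp : ∀ i, 0 ≤ p i ∧ p i ≤ 1)
    {R : ∀ n, (Fin n → Fin D → Bool) → (Fin 0 → Fin n) → Prop} (hR : IsRecognizable R) :
    ∃ ℓ, Tendsto (fun n => Pr p n fun ω => R n (backEdges D ω) default) atTop (nhds ℓ) := by
  classical
  obtain ⟨c, hc, hcR⟩ := hR
  let accepting (s : c.Quotient) : Prop :=
    ∃ (n : ℕ) (w : Fin n → Fin D → Bool), wordClass c w = s ∧ R n w default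
  have haccepting (n : ℕ) (w : Fin n → Fin D → Bool) :
      R n w default ↔ accepting (wordClass c w) :=
    ⟨fun h => ⟨n, w, rfl, h⟩, fun ⟨_, _, hw, h⟩ => hcR _ _ _ _ _ _ ((Con.eq c).1 hw) h⟩
  simp only [haccepting, Pr_eq_bernoulliMean]
  exact exists_tendsto_bernoulliMean_wordClass hp hc fun s => if accepting s then 1 else 0

end Convergence

/-- If `p̄` (with `0 ≤ p i ≤ 1`) has only finitely many non-zero terms, then
for every first-order sentence `ψ` of the language `L≤`, `Prob(n, p̄; ψ)` converges. -/
theorem statement_7 (p : ℕ → ℝ) (hp : ∀ i, 0 ≤ p i ∧ p i ≤ 1)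
    (hfin : {i : ℕ | p i ≠ 0}.Finite) (ψ : Lle.Sentence) :
    ∃ ℓ : ℝ, Tendsto (fun n => ProbLe p n ψ) atTop (nhds ℓ) := by
  obtain ⟨D, hD⟩ := hfin.bddAbove
  have hzero : ∀ i > D, p i = 0 := fun i hi => not_not.1 fun h => hi.not_ge (hD h)
  simp only [probLe_eq_Pr_wordStructure hzero]
  exact (isRecognizable_realize ψ).exists_tendsto_Pr hp

end RandomGraph
end
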